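/- Lower bound on Dirichlet boundary-crossing probabilities: Let m ≥ 1, b > 0, and let f : {0,…,m} → [0,b] satisfy f(0) = 0 and f(m) = b. Let α = (α_0,…,α_m) ∈ ℝ_{>0}^{m+1}, set ᾱ = Σ_{j=0}^m α_j and p̄(ℓ) = α_ℓ/ᾱ for ℓ = 0,…,m. Fix ε ∈ (0,1) and assume min(α_0, α_m) ≥ c₀·ε^{−2}. Define α⁺ = (α_0, α_1, …, α_{m−1}, α_m + 1). Then for every μ ∈ (p̄f, b), P_{w ∼ Dir(α⁺)}( wf ≥ μ ) ≥ (1 − ε) · P_{ζ ∼ N(0,1)}( ζ ≥ √(2 ᾱ Kinf(p̄, μ, f)) ). -/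

import Mathlib

open MeasureTheory ProbabilityTheory Real Set
open scoped ENNReal

noncomputable section

/-- The absolute constant `c₀ = (2/π)(8 + 49√6/9)²`. -/
def c0 : ℝ := (2 / Real.pi) * (8 + 49 * Real.sqrt 6 / 9) ^ 2

/-- Unnormalized density of `Dir(α)` in the first `m` coordinates. -/
def dirichletDensity (m : ℕ) (α : Fin (m + 1) → ℝ) : (Fin m → ℝ) → ℝ :=
  Set.indicator {x | (∀ i, 0 ≤ x i) ∧ ∑ i, x i ≤ 1}
    (fun x => (∏ i : Fin m, x i ^ (α i.castSucc - 1)) * (1 - ∑ i, x i) ^ (α (Fin.last m) - 1))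

def dirichletBase (m : ℕ) (α : Fin (m + 1) → ℝ) : Measure (Fin m → ℝ) :=
  volume.withDensity fun x => ENNReal.ofReal (dirichletDensity m α x)

/-- The Dirichlet distribution `Dir(α)`, as the law of the vector
`(x₀, …, x_{m-1}, 1 - ∑ x_i)` on the simplex `Δ_m ⊆ ℝ^{m+1}`. -/
def dirichlet (m : ℕ) (α : Fin (m + 1) → ℝ) : Measure (Fin (m + 1) → ℝ) :=
  Measure.map (fun x : Fin m → ℝ => Fin.snoc x (1 - ∑ i, x i))
    ((dirichletBase m α Set.univ)⁻¹ • dirichletBase m α)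

/-- Kullback–Leibler divergence between finitely supported `p, q` (for `p ≪ q`). -/
def klReal {m : ℕ} (p q : Fin (m + 1) → ℝ) : ℝ :=
  ∑ i, if p i = 0 then 0 else p i * Real.log (p i / q i)

/-- `Kinf(p, μ, f) = inf { KL(p,q) : q ∈ Δ_m, qf ≥ μ }`. -/
def Kinf {m : ℕ} (p : Fin (m + 1) → ℝ) (μ : ℝ) (f : Fin (m + 1) → ℝ) : ℝ :=
  sInf {x | ∃ q ∈ stdSimplex ℝ (Fin (m + 1)),
    (∀ i, q i = 0 → p i = 0) ∧ μ ≤ ∑ i, f i * q i ∧ x = klReal p q}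

/-- `Kinf*(p, μ, f) = inf { KL(p,q) : q ∈ Δ_m, qf = μ }`. -/
def Kinfstar {m : ℕ} (p : Fin (m + 1) → ℝ) (μ : ℝ) (f : Fin (m + 1) → ℝ) : ℝ :=
  sInf {x | ∃ q ∈ stdSimplex ℝ (Fin (m + 1)),
    (∀ i, q i = 0 → p i = 0) ∧ (∑ i, f i * q i) = μ ∧ x = klReal p q}

/-- `A(p, μ, f) = sgn(μ - pf) √(2 Kinf*(p, μ, f))`. -/
def Afun {m : ℕ} (p : Fin (m + 1) → ℝ) (μ : ℝ) (f : Fin (m + 1) → ℝ) : ℝ :=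
  Real.sign (μ - ∑ ℓ, f ℓ * p ℓ) * Real.sqrt (2 * Kinfstar p μ f)



lemma lintegral_pi_prod_aux (n : ℕ) (g : Fin n → ℝ → ℝ≥0∞) (hg : ∀ i, Measurable (g i)) :
    ∫⁻ y : Fin n → ℝ, ∏ i, g i (y i) = ∏ i, ∫⁻ t, g i t := by
  induction n with
  | zero => simp [lintegral_unique, volume_pi]
  | succ n ih =>
    have h := (volume_preserving_piFinSuccAbove (fun _ : Fin (n+1) => ℝ) 0).symm
    rw [← h.lintegral_comp_emb (MeasurableEquiv.measurableEmbedding _)]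
    rw [Fin.prod_univ_succ]
    rw [← ih (fun i => g i.succ) (fun i => hg _)]
    rw [← lintegral_prod_mul (hg 0).aemeasurable]
    · refine lintegral_congr fun p => ?_
      rw [Fin.prod_univ_succ]
      rfl
    · exact (Finset.measurable_prod _ fun i _ => (hg i.succ).comp (measurable_pi_apply i)).aemeasurable

lemma pi_gamma_eq (n : ℕ) (β : Fin n → ℝ) (r : Fin n → ℝ) (hβ : ∀ i, 0 < β i) (hr : ∀ i, 0 < r i) :
    Measure.pi (fun j => gammaMeasure (β j) (r j)) =
      (volume : Measure (Fin n → ℝ)).withDensity (fun y => ∏ j, gammaPDF (β j) (r j) (y j)) := by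
  have : ∀ j, IsProbabilityMeasure (gammaMeasure (β j) (r j)) := fun j =>
    isProbabilityMeasure_gammaMeasure (hβ j) (hr j)
  have hm : ∀ j, Measurable (gammaPDF (β j) (r j)) := fun j =>
    (measurable_gammaPDFReal _ _).ennreal_ofReal
  refine Measure.pi_eq fun s hs => ?_
  rw [withDensity_apply _ (MeasurableSet.univ_pi hs), ← lintegral_indicator (MeasurableSet.univ_pi hs)]
  have : ∀ y : Fin n → ℝ, (Set.univ.pi s).indicator (fun y => ∏ j, gammaPDF (β j) (r j) (y j)) y
      = ∏ j, (s j).indicator (gammaPDF (β j) (r j)) (y j) := by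
    intro y
    by_cases hy : y ∈ Set.univ.pi s
    · rw [Set.indicator_of_mem hy]
      refine Finset.prod_congr rfl fun j _ => ?_
      rw [Set.indicator_of_mem (hy j (Set.mem_univ j))]
    · rw [Set.indicator_of_notMem hy]
      simp only [Set.mem_pi, Set.mem_univ, true_implies, not_forall] at hy
      obtain ⟨j, hj⟩ := hy
      exact (Finset.prod_eq_zero (Finset.mem_univ j) (Set.indicator_of_notMem hj _)).symm
  rw [lintegral_congr this, lintegral_pi_prod_aux n _ (fun i => (hm i).indicator (hs i))]
  refine Finset.prod_congr rfl fun j _ => ?_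
  rw [lintegral_indicator (hs j), gammaMeasure, withDensity_apply _ (hs j)]

/-- unnormalised power density -/
def Qd {n : ℕ} (β : Fin n → ℝ) (y : Fin n → ℝ) : ℝ≥0∞ :=
  ∏ j, (if 0 ≤ y j then ENNReal.ofReal (y j ^ (β j - 1)) else 0)

lemma measurable_Qd {n : ℕ} (β : Fin n → ℝ) : Measurable (Qd β) := by
  unfold Qd
  refine Finset.measurable_prod _ fun j _ => ?_
  refine Measurable.ite (measurableSet_le measurable_const (measurable_pi_apply j)) ?_ measurable_const
  exact ((measurable_pi_apply j).pow_const _).ennreal_ofReal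

lemma Qd_smul {n : ℕ} (β : Fin n → ℝ) (y : Fin n → ℝ) {s : ℝ} (hs : 0 < s) :
    Qd β (s • y) = ENNReal.ofReal (s ^ (∑ j, (β j - 1))) * Qd β y := by
  unfold Qd
  rw [Real.rpow_sum_of_pos hs, ENNReal.ofReal_prod_of_nonneg (fun i _ => by positivity),
    ← Finset.prod_mul_distrib]
  refine Finset.prod_congr rfl fun j _ => ?_
  simp only [Pi.smul_apply, smul_eq_mul]
  by_cases h : 0 ≤ y j
  · rw [if_pos h, if_pos (by positivity), Real.mul_rpow hs.le h, ENNReal.ofReal_mul (by positivity)]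
  · rw [if_neg h, if_neg (by nlinarith), mul_zero]

lemma Qd_zero_of_sum_neg {n : ℕ} (β : Fin n → ℝ) (y : Fin n → ℝ) (h : ∑ j, y j < 0) :
    Qd β y = 0 := by
  unfold Qd
  have : ∃ j, y j < 0 := by
    by_contra hc
    push Not at hc
    exact absurd (Finset.sum_nonneg fun j (_ : j ∈ Finset.univ) => hc j) (not_le.mpr h)
  obtain ⟨j, hj⟩ := this
  exact Finset.prod_eq_zero (Finset.mem_univ j) (if_neg (not_le.mpr hj))

lemma dirichletDensity_eq_Qd (m : ℕ) (β : Fin (m + 1) → ℝ) (x : Fin m → ℝ) :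
    ENNReal.ofReal (dirichletDensity m β x) = Qd β (Fin.snoc x (1 - ∑ i, x i)) := by
  unfold dirichletDensity Qd
  rw [Fin.prod_univ_castSucc]
  simp only [Fin.snoc_castSucc, Fin.snoc_last]
  by_cases hx : (∀ i, 0 ≤ x i) ∧ ∑ i, x i ≤ 1
  · rw [Set.indicator_of_mem (by exact hx)]
    rw [ENNReal.ofReal_mul (Finset.prod_nonneg fun i _ => Real.rpow_nonneg (hx.1 i) _),
      ENNReal.ofReal_prod_of_nonneg (fun i _ => Real.rpow_nonneg (hx.1 i) _),
      if_pos (by linarith [hx.2])]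
    congr 1
    exact Finset.prod_congr rfl fun i _ => (if_pos (hx.1 i)).symm
  · rw [Set.indicator_of_notMem (by exact hx), ENNReal.ofReal_zero]
    rw [not_and_or] at hx
    symm
    rcases hx with hx | hx
    · push Not at hx
      obtain ⟨i, hi⟩ := hx
      rw [Finset.prod_eq_zero (Finset.mem_univ i) (if_neg (not_le.mpr hi)), zero_mul]
    · rw [if_neg (by linarith), mul_zero]

lemma lintegral_smul_aux (m : ℕ) (F : (Fin m → ℝ) → ℝ≥0∞) {s : ℝ} (hs : 0 < s) :
    ∫⁻ x, F x = ENNReal.ofReal (s ^ m) * ∫⁻ x, F (s • x) := by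
  have h := Measure.map_addHaar_smul (volume : Measure (Fin m → ℝ)) hs.ne'
  have h2 : ∫⁻ x, F (s • x) = ∫⁻ x, F x ∂(Measure.map (s • ·) (volume : Measure (Fin m → ℝ))) :=
    ((Homeomorph.smulOfNeZero s hs.ne').measurableEmbedding.lintegral_map F).symm
  rw [h2, h, lintegral_smul_measure, smul_eq_mul, ← mul_assoc, ← ENNReal.ofReal_mul (by positivity)]
  simp only [Module.finrank_fintype_fun_eq_card, Fintype.card_fin]
  rw [abs_of_pos (by positivity), mul_inv_cancel₀ (by positivity), ENNReal.ofReal_one, one_mul]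

/-- cone indicator -/
def coneI {n : ℕ} (c : Fin n → ℝ) (y : Fin n → ℝ) : ℝ≥0∞ := if 0 ≤ ∑ j, c j * y j then 1 else 0

lemma measurable_coneI {n : ℕ} (c : Fin n → ℝ) : Measurable (coneI c) := by
  unfold coneI
  refine Measurable.ite (measurableSet_le measurable_const ?_) measurable_const measurable_const
  exact Finset.measurable_sum _ fun j _ => (measurable_pi_apply j).const_mul _

lemma coneI_smul {n : ℕ} (c : Fin n → ℝ) (y : Fin n → ℝ) {s : ℝ} (hs : 0 < s) :
    coneI c (s • y) = coneI c y := by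
  unfold coneI
  have : ∑ j, c j * (s • y) j = s * ∑ j, c j * y j := by
    rw [Finset.mul_sum]; exact Finset.sum_congr rfl fun j _ => by simp; ring
  rw [this]
  simp only [mul_nonneg_iff_of_pos_left hs]

lemma snoc_meas (m : ℕ) : Measurable (fun p : (Fin m → ℝ) × ℝ => (Fin.snoc p.1 p.2 : Fin (m+1) → ℝ)) := by
  refine measurable_pi_lambda _ fun j => ?_
  refine Fin.lastCases ?_ (fun i => ?_) j
  · simpa only [Fin.snoc_last] using measurable_snd
  · simp only [Fin.snoc_castSucc]; exact (measurable_pi_apply i).comp measurable_fst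

lemma cone_integral (m : ℕ) (β : Fin (m + 1) → ℝ) (c : Fin (m+1) → ℝ) :
    ∫⁻ y : Fin (m+1) → ℝ, Qd β y * ENNReal.ofReal (Real.exp (-∑ j, y j)) * coneI c y
      = (∫⁻ s in Ioi (0:ℝ), ENNReal.ofReal (s ^ m * (s ^ (∑ j, (β j - 1)) * Real.exp (-s)))) *
        ∫⁻ x : Fin m → ℝ, ENNReal.ofReal (dirichletDensity m β x) *
          coneI c (Fin.snoc x (1 - ∑ i, x i)) := by
  set H : (Fin (m+1) → ℝ) → ℝ≥0∞ :=
    fun y => Qd β y * ENNReal.ofReal (Real.exp (-∑ j, y j)) * coneI c y with hH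
  have hHm : Measurable H := by
    refine ((measurable_Qd β).mul ?_).mul (measurable_coneI c)
    exact (Finset.measurable_sum _ fun j _ => measurable_pi_apply j).neg.exp.ennreal_ofReal
  have h := (volume_preserving_piFinSuccAbove (fun _ : Fin (m+1) => ℝ) (Fin.last m)).symm
  change ∫⁻ y, H y = _
  rw [← h.lintegral_comp_emb (MeasurableEquiv.measurableEmbedding _)]
  have e1 : ∀ p : ℝ × (Fin m → ℝ),
      H ((MeasurableEquiv.piFinSuccAbove (fun _ : Fin (m+1) => ℝ) (Fin.last m)).symm p)
        = H (Fin.snoc p.2 p.1) := by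
    intro p
    congr 1
    exact Fin.insertNth_last' p.1 p.2
  rw [lintegral_congr e1]
  change ∫⁻ p : ℝ × (Fin m → ℝ), _ ∂((volume : Measure ℝ).prod volume) = _
  have hm1 : Measurable (fun p : ℝ × (Fin m → ℝ) => H (Fin.snoc p.2 p.1)) :=
    hHm.comp ((snoc_meas m).comp measurable_swap)
  rw [lintegral_prod_symm' _ hm1]
  have e2 : ∀ x : Fin m → ℝ, ∫⁻ a : ℝ, H (Fin.snoc x a) = ∫⁻ s : ℝ, H (Fin.snoc x (s - ∑ i, x i)) := by
    intro x
    exact (lintegral_sub_right_eq_self (fun a => H (Fin.snoc x a)) _).symm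
  simp only [e2]
  have hm2 : Measurable (fun p : (Fin m → ℝ) × ℝ => H (Fin.snoc p.1 (p.2 - ∑ i, p.1 i))) := by
    refine hHm.comp ((snoc_meas m).comp (measurable_fst.prodMk ?_))
    exact measurable_snd.sub (Finset.measurable_sum _ fun j _ => (measurable_pi_apply j).comp measurable_fst)
  rw [lintegral_lintegral_swap hm2.aemeasurable]
  have hsum : ∀ (x : Fin m → ℝ) (s : ℝ), ∑ j, (Fin.snoc x (s - ∑ i, x i) : Fin (m+1) → ℝ) j = s := by
    intro x s
    rw [Fin.sum_univ_castSucc]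
    simp
  have e3 : ∀ s : ℝ, s < 0 → ∫⁻ x : Fin m → ℝ, H (Fin.snoc x (s - ∑ i, x i)) = 0 := by
    intro s hs
    rw [← lintegral_zero (μ := (volume : Measure (Fin m → ℝ)))]
    refine lintegral_congr fun x => ?_
    simp only [hH]
    rw [Qd_zero_of_sum_neg β _ (by rw [hsum]; exact hs)]
    simp
  set J := ∫⁻ x : Fin m → ℝ, ENNReal.ofReal (dirichletDensity m β x) *
          coneI c (Fin.snoc x (1 - ∑ i, x i)) with hJ
  have e4 : ∀ s : ℝ, 0 < s → ∫⁻ x : Fin m → ℝ, H (Fin.snoc x (s - ∑ i, x i)) =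
      ENNReal.ofReal (s ^ m * (s ^ (∑ j, (β j - 1)) * Real.exp (-s))) * J := by
    intro s hs
    rw [lintegral_smul_aux m _ hs, ENNReal.ofReal_mul (by positivity), mul_assoc]
    congr 1
    have hms : Measurable (fun x : Fin m → ℝ => (Fin.snoc x (1 - ∑ i, x i) : Fin (m+1) → ℝ)) :=
      (snoc_meas m).comp (measurable_id.prodMk
        (measurable_const.sub (Finset.measurable_sum _ fun j _ => measurable_pi_apply j)))
    rw [hJ, ← lintegral_const_mul]
    swap
    · simp only [dirichletDensity_eq_Qd]
      exact ((measurable_Qd β).comp hms).mul ((measurable_coneI c).comp hms)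
    refine lintegral_congr fun x => ?_
    have e5 : (Fin.snoc (s • x) (s - ∑ i, (s • x) i) : Fin (m+1) → ℝ) =
        s • (Fin.snoc x (1 - ∑ i, x i) : Fin (m+1) → ℝ) := by
      funext j
      refine Fin.lastCases ?_ (fun i => ?_) j
      · simp [← Finset.mul_sum]; ring
      · simp
    have e6 := hsum (s • x) s
    simp only [hH]
    rw [e6, e5, Qd_smul β _ hs, coneI_smul c _ hs, dirichletDensity_eq_Qd,
      ENNReal.ofReal_mul (by positivity)]
    ring
  have e7 : ∫⁻ s : ℝ, ∫⁻ x : Fin m → ℝ, H (Fin.snoc x (s - ∑ i, x i)) =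
      ∫⁻ s in Ioi (0:ℝ), ∫⁻ x : Fin m → ℝ, H (Fin.snoc x (s - ∑ i, x i)) := by
    rw [← lintegral_add_compl _ (measurableSet_Ioi (a := (0:ℝ)))]
    have : ∫⁻ s in (Ioi (0:ℝ))ᶜ, ∫⁻ x : Fin m → ℝ, H (Fin.snoc x (s - ∑ i, x i)) = 0 := by
      rw [compl_Ioi, setLIntegral_congr Iio_ae_eq_Iic.symm,
        setLIntegral_congr_fun measurableSet_Iio (fun s hs => e3 s hs), lintegral_zero]
    rw [this, add_zero]
  rw [e7, setLIntegral_congr_fun measurableSet_Ioi (fun s hs => e4 s hs), lintegral_mul_const]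
  fun_prop

lemma gamma_cone (m : ℕ) (β : Fin (m + 1) → ℝ) (c : Fin (m+1) → ℝ) (hβ : ∀ i, 0 < β i) :
    ∫⁻ y : Fin (m+1) → ℝ, Qd β y * ENNReal.ofReal (Real.exp (-∑ j, y j)) * coneI c y
      = ENNReal.ofReal (∏ j, Real.Gamma (β j)) *
        (Measure.pi (fun j => gammaMeasure (β j) 1)) {y | 0 ≤ ∑ j, c j * y j} := by
  have hms : MeasurableSet {y : Fin (m+1) → ℝ | 0 ≤ ∑ j, c j * y j} :=
    measurableSet_le measurable_const
      (Finset.measurable_sum _ fun j _ => (measurable_pi_apply j).const_mul _)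
  rw [pi_gamma_eq (m+1) β (fun _ => 1) hβ (fun _ => one_pos), withDensity_apply _ hms,
    ← lintegral_indicator hms, ← lintegral_const_mul' _ _ ENNReal.ofReal_ne_top]
  refine lintegral_congr fun y => ?_
  unfold coneI
  by_cases hy : 0 ≤ ∑ j, c j * y j
  · rw [if_pos hy, Set.indicator_of_mem (by exact hy), mul_one,
      ENNReal.ofReal_prod_of_nonneg (fun i _ => (Real.Gamma_pos_of_pos (hβ i)).le),
      ← Finset.prod_mul_distrib, ← Finset.sum_neg_distrib, Real.exp_sum,
      ENNReal.ofReal_prod_of_nonneg (fun i _ => (Real.exp_pos _).le)]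
    unfold Qd
    rw [← Finset.prod_mul_distrib]
    refine Finset.prod_congr rfl fun j _ => ?_
    have hG := Real.Gamma_pos_of_pos (hβ j)
    by_cases h : 0 ≤ y j
    · rw [if_pos h, gammaPDF_of_nonneg h, ← ENNReal.ofReal_mul (by positivity),
        ← ENNReal.ofReal_mul (by positivity)]
      congr 1
      simp only [Real.one_rpow, one_mul]
      field_simp
    · rw [if_neg h, gammaPDF_of_neg (not_le.mp h)]; simp
  · rw [if_neg hy, Set.indicator_of_notMem (by exact hy)]; simp

lemma dirichlet_eq_gamma (m : ℕ) (β : Fin (m + 1) → ℝ) (hβ : ∀ i, 0 < β i)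
    (f : Fin (m+1) → ℝ) (μ : ℝ) :
    dirichlet m β {w | μ ≤ ∑ ℓ, f ℓ * w ℓ} =
      (Measure.pi (fun j => gammaMeasure (β j) 1)) {y | 0 ≤ ∑ j, (f j - μ) * y j} := by
  have : ∀ j, IsProbabilityMeasure (gammaMeasure (β j) 1) := fun j =>
    isProbabilityMeasure_gammaMeasure (hβ j) one_pos
  have hG : 0 < ∏ j, Real.Gamma (β j) := Finset.prod_pos fun j _ => Real.Gamma_pos_of_pos (hβ j)
  have hms : Measurable (fun x : Fin m → ℝ => (Fin.snoc x (1 - ∑ i, x i) : Fin (m+1) → ℝ)) :=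
      (snoc_meas m).comp (measurable_id.prodMk
        (measurable_const.sub (Finset.measurable_sum _ fun j _ => measurable_pi_apply j)))
  have hset : MeasurableSet {w : Fin (m+1) → ℝ | μ ≤ ∑ ℓ, f ℓ * w ℓ} :=
    measurableSet_le measurable_const
      (Finset.measurable_sum _ fun j _ => (measurable_pi_apply j).const_mul _)
  have hJ : ∀ c : Fin (m+1) → ℝ, ∫⁻ x : Fin m → ℝ, ENNReal.ofReal (dirichletDensity m β x) *
          coneI c (Fin.snoc x (1 - ∑ i, x i)) = dirichletBase m β
            {x | 0 ≤ ∑ j, c j * (Fin.snoc x (1 - ∑ i, x i) : Fin (m+1) → ℝ) j} := by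
    intro c
    have hs2 : MeasurableSet {x : Fin m → ℝ |
        0 ≤ ∑ j, c j * (Fin.snoc x (1 - ∑ i, x i) : Fin (m+1) → ℝ) j} :=
      measurableSet_le measurable_const
        (Finset.measurable_sum _ fun j _ => ((measurable_pi_apply j).comp hms).const_mul _)
    rw [dirichletBase, withDensity_apply _ hs2, ← lintegral_indicator hs2]
    refine lintegral_congr fun x => ?_
    unfold coneI
    by_cases h : 0 ≤ ∑ j, c j * (Fin.snoc x (1 - ∑ i, x i) : Fin (m+1) → ℝ) j
    · rw [if_pos h, Set.indicator_of_mem (by exact h), mul_one]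
    · rw [if_neg h, Set.indicator_of_notMem (by exact h), mul_zero]
  set C := ∫⁻ s in Ioi (0:ℝ), ENNReal.ofReal (s ^ m * (s ^ (∑ j, (β j - 1)) * Real.exp (-s))) with hC
  have key : ∀ c : Fin (m+1) → ℝ, ENNReal.ofReal (∏ j, Real.Gamma (β j)) *
        (Measure.pi (fun j => gammaMeasure (β j) 1)) {y | 0 ≤ ∑ j, c j * y j} = C *
        dirichletBase m β {x | 0 ≤ ∑ j, c j * (Fin.snoc x (1 - ∑ i, x i) : Fin (m+1) → ℝ) j} := by
    intro c
    rw [← gamma_cone m β c hβ, cone_integral, hJ]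
  have k0 := key 0
  have k1 := key (fun j => f j - μ)
  simp only [Pi.zero_apply, zero_mul, Finset.sum_const_zero, le_refl] at k0
  simp only [ofPred_true, measure_univ, mul_one] at k0
  have hset2 : (fun x : Fin m → ℝ => (Fin.snoc x (1 - ∑ i, x i) : Fin (m+1) → ℝ)) ⁻¹'
      {w | μ ≤ ∑ ℓ, f ℓ * w ℓ} =
      {x | 0 ≤ ∑ j, (f j - μ) * (Fin.snoc x (1 - ∑ i, x i) : Fin (m+1) → ℝ) j} := by
    ext x
    have : ∑ j, (Fin.snoc x (1 - ∑ i, x i) : Fin (m+1) → ℝ) j = 1 := by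
      rw [Fin.sum_univ_castSucc]; simp
    simp only [mem_preimage, mem_ofPred_eq, sub_mul, Finset.sum_sub_distrib, ← Finset.mul_sum, this]
    constructor <;> intro h <;> linarith
  unfold dirichlet
  rw [Measure.map_apply hms hset, hset2, Measure.smul_apply, smul_eq_mul]
  set a := (Measure.pi (fun j => gammaMeasure (β j) 1)) {y | 0 ≤ ∑ j, (f j - μ) * y j}
  set B := dirichletBase m β {x | 0 ≤ ∑ j, (f j - μ) * (Fin.snoc x (1 - ∑ i, x i) : Fin (m+1) → ℝ) j}
  set U := dirichletBase m β univ
  have hCU : C * U ≠ 0 := by rw [← k0]; simpa using hG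
  have hCU' : C * U ≠ ⊤ := by rw [← k0]; exact ENNReal.ofReal_ne_top
  have hC0 : C ≠ 0 := left_ne_zero_of_mul hCU
  have hU0 : U ≠ 0 := right_ne_zero_of_mul hCU
  have hCt : C ≠ ⊤ := fun h => hCU' (by rw [h, ENNReal.top_mul hU0])
  have hUt : U ≠ ⊤ := fun h => hCU' (by rw [h, ENNReal.mul_top hC0])
  rw [k0, mul_assoc] at k1
  have := (ENNReal.mul_right_inj hC0 hCt).mp k1
  rw [← this, ← mul_assoc, ENNReal.inv_mul_cancel hU0 hUt, one_mul]


lemma lintegral_mul_aux (F : ℝ → ℝ≥0∞) {s : ℝ} (hs : 0 < s) :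
    ∫⁻ x, F x = ENNReal.ofReal s * ∫⁻ x, F (s * x) := by
  have h := Measure.map_addHaar_smul (volume : Measure ℝ) hs.ne'
  have h2 : ∫⁻ x, F (s • x) = ∫⁻ x, F x ∂(Measure.map (s • ·) (volume : Measure ℝ)) :=
    ((Homeomorph.smulOfNeZero s hs.ne').measurableEmbedding.lintegral_map F).symm
  change _ = _ * ∫⁻ x, F (s • x)
  rw [h2, h, lintegral_smul_measure, smul_eq_mul, ← mul_assoc, ← ENNReal.ofReal_mul (by positivity)]
  simp only [Module.finrank_self, pow_one]
  rw [abs_of_pos (by positivity), mul_inv_cancel₀ (by positivity), ENNReal.ofReal_one, one_mul]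

lemma gammaMeasure_scale (a r : ℝ) (ha : 0 < a) (hr : 0 < r) :
    (gammaMeasure a r).map (fun t => r * t) = gammaMeasure a 1 := by
  have hG := Real.Gamma_pos_of_pos ha
  have hm : Measurable (fun t : ℝ => r * t) := measurable_const_mul r
  ext s hs
  rw [Measure.map_apply hm hs, gammaMeasure, gammaMeasure, withDensity_apply _ (hm hs),
    withDensity_apply _ hs, ← lintegral_indicator hs, ← lintegral_indicator (hm hs),
    lintegral_mul_aux (s.indicator (gammaPDF a 1)) hr, ← lintegral_const_mul' _ _ ENNReal.ofReal_ne_top]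
  refine lintegral_congr fun t => ?_
  by_cases h : r * t ∈ s
  · rw [Set.indicator_of_mem (by exact h), Set.indicator_of_mem h]
    by_cases ht : 0 ≤ t
    · rw [gammaPDF_of_nonneg ht, gammaPDF_of_nonneg (by positivity), ← ENNReal.ofReal_mul hr.le]
      congr 1
      rw [Real.mul_rpow hr.le ht, Real.rpow_sub_one hr.ne' a, Real.one_rpow, one_mul]
      field_simp
    · rw [gammaPDF_of_neg (not_le.mp ht), gammaPDF_of_neg (by nlinarith), mul_zero]
  · rw [Set.indicator_of_notMem (by exact h), Set.indicator_of_notMem h, mul_zero]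

lemma tilt_gamma (n : ℕ) (β x c : Fin n → ℝ) (l : ℝ) (hl : 0 < l) (hβ : ∀ i, 0 < β i)
    (hx : ∀ i, -1 < x i) (hc : ∀ i, l * (c i * (1 + x i)) = x i) :
    (Measure.pi (fun j => gammaMeasure (β j) 1)) {y | 0 ≤ ∑ j, c j * y j} =
      ENNReal.ofReal (∏ j, (1 + x j) ^ (β j)) *
        ∫⁻ y, (if 0 ≤ ∑ j, x j * y j then ENNReal.ofReal (Real.exp (-∑ j, x j * y j)) else 0)
          ∂(Measure.pi (fun j => gammaMeasure (β j) 1)) := by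
  have hr : ∀ j, 0 < 1 + x j := fun j => by linarith [hx j]
  have : ∀ j, IsProbabilityMeasure (gammaMeasure (β j) 1) := fun j =>
    isProbabilityMeasure_gammaMeasure (hβ j) one_pos
  have : ∀ j, IsProbabilityMeasure (gammaMeasure (β j) (1 + x j)) := fun j =>
    isProbabilityMeasure_gammaMeasure (hβ j) (hr j)
  have hlin : ∀ d : Fin n → ℝ, Measurable (fun y : Fin n → ℝ => ∑ j, d j * y j) := fun d =>
    Finset.measurable_sum _ fun j _ => (measurable_pi_apply j).const_mul _
  have hpdf : ∀ a r, Measurable (gammaPDF a r) := fun a r =>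
    (measurable_gammaPDFReal _ _).ennreal_ofReal
  have e1 : Measure.pi (fun j => gammaMeasure (β j) 1) =
      (Measure.pi (fun j => gammaMeasure (β j) (1 + x j))).map
        (fun y i => (1 + x i) * y i) := by
    rw [Measure.pi_map_pi (f := fun i t => (1 + x i) * t)
      (fun i => (measurable_const_mul _).aemeasurable)]
    congr 1
    funext j
    exact (gammaMeasure_scale _ _ (hβ j) (hr j)).symm
  have hms : MeasurableSet {y : Fin n → ℝ | 0 ≤ ∑ j, c j * y j} :=
    measurableSet_le measurable_const (hlin c)
  have hms2 : MeasurableSet {y : Fin n → ℝ | 0 ≤ ∑ j, x j * y j} :=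
    measurableSet_le measurable_const (hlin x)
  have hpre : (fun (y : Fin n → ℝ) i => (1 + x i) * y i) ⁻¹' {y | 0 ≤ ∑ j, c j * y j} =
      {y | 0 ≤ ∑ j, x j * y j} := by
    ext y
    have : ∑ j, x j * y j = l * ∑ j, c j * ((1 + x j) * y j) := by
      rw [Finset.mul_sum]
      refine Finset.sum_congr rfl fun j _ => ?_
      rw [← hc j]; ring_nf
      have := hc j
      linear_combination (-(c j * y j * l)) * this
    simp only [mem_preimage, mem_ofPred_eq, this, mul_nonneg_iff_of_pos_left hl]
  conv_lhs => rw [e1]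
  rw [Measure.map_apply (by fun_prop) hms, hpre, pi_gamma_eq n β _ hβ hr,
    pi_gamma_eq n β (fun _ => 1) hβ (fun _ => one_pos), withDensity_apply _ hms2,
    ← lintegral_indicator hms2, lintegral_withDensity_eq_lintegral_mul,
    ← lintegral_const_mul' _ _ ENNReal.ofReal_ne_top]
  · refine lintegral_congr fun y => ?_
    by_cases h : 0 ≤ ∑ j, x j * y j
    · rw [Set.indicator_of_mem (by exact h)]
      simp only [Pi.mul_apply]
      rw [if_pos h, ENNReal.ofReal_prod_of_nonneg (fun i _ => Real.rpow_nonneg (hr i).le _),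
        ← Finset.sum_neg_distrib, Real.exp_sum,
        ENNReal.ofReal_prod_of_nonneg (fun i _ => (Real.exp_pos _).le),
        ← Finset.prod_mul_distrib, ← Finset.prod_mul_distrib]
      refine Finset.prod_congr rfl fun j _ => ?_
      have hG := Real.Gamma_pos_of_pos (hβ j)
      have hrj := hr j
      by_cases ht : 0 ≤ y j
      · rw [gammaPDF_of_nonneg ht, gammaPDF_of_nonneg ht, ← ENNReal.ofReal_mul (by positivity),
          ← ENNReal.ofReal_mul (by positivity)]
        congr 1
        rw [Real.one_rpow, show -((1 + x j) * y j) = -(1 * y j) + -(x j * y j) by ring, Real.exp_add]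
        ring
      · rw [gammaPDF_of_neg (not_le.mp ht), gammaPDF_of_neg (not_le.mp ht), zero_mul, mul_zero]
    · rw [Set.indicator_of_notMem (by exact h)]
      simp [h]
  · exact Finset.measurable_prod _ fun j _ => (hpdf _ _).comp (measurable_pi_apply j)
  · exact Measurable.ite hms2 (hlin x).neg.exp.ennreal_ofReal measurable_const


lemma gamma_mgf (a u : ℝ) (ha : 0 < a) (hu : u < 1) :
    mgf id (gammaMeasure a 1) u = (1 - u) ^ (-a) := by
  have hG := Real.Gamma_pos_of_pos ha
  have hpdf : Measurable (gammaPDF a 1) := (measurable_gammaPDFReal _ _).ennreal_ofReal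
  unfold mgf gammaMeasure
  rw [integral_withDensity_eq_integral_toReal_smul hpdf (ae_of_all _ fun x => by simp [gammaPDF])]
  have e1 : ∀ x : ℝ, (gammaPDF a 1 x).toReal • rexp (u * id x) =
      (Ici (0:ℝ)).indicator (fun x => (Real.Gamma a)⁻¹ * (x ^ (a - 1) * rexp (-((1 - u) * x)))) x := by
    intro x
    rw [gammaPDF, ENNReal.toReal_ofReal (gammaPDFReal_nonneg ha one_pos x), gammaPDFReal]
    by_cases hx : 0 ≤ x
    · rw [if_pos hx, Set.indicator_of_mem (by exact hx), Real.one_rpow, smul_eq_mul, id,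
        show -((1 - u) * x) = -(1 * x) + u * x by ring, Real.exp_add]
      ring
    · rw [if_neg hx, Set.indicator_of_notMem (by exact hx), zero_smul]
  rw [integral_congr_ae (ae_of_all _ e1), integral_indicator measurableSet_Ici,
    integral_Ici_eq_integral_Ioi, integral_const_mul,
    Real.integral_rpow_mul_exp_neg_mul_Ioi ha (by linarith), one_div, Real.inv_rpow (by linarith),
    Real.rpow_neg (by linarith)]
  field_simp

lemma gamma_charFun (a t : ℝ) (ha : 0 < a) :
    charFun (gammaMeasure a 1) t = Complex.exp (-a * Complex.log (1 - t * Complex.I)) := by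
  have hint : ∀ u : ℝ, u < 1 → u ∈ integrableExpSet id (gammaMeasure a 1) := by
    intro u hu
    by_contra h
    have h1 := gamma_mgf a u ha hu
    have : mgf id (gammaMeasure a 1) u = 0 := integral_undef h
    rw [this] at h1
    have : 0 < (1 - u) ^ (-a) := Real.rpow_pos_of_pos (by linarith) _
    linarith
  have hsub : Iio (1:ℝ) ⊆ interior (integrableExpSet id (gammaMeasure a 1)) :=
    interior_maximal (fun u hu => hint u hu) isOpen_Iio
  set U : Set ℂ := {z | z.re < 1} with hU
  have hUo : IsOpen U := isOpen_Iio.preimage Complex.continuous_re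
  have hX : AnalyticOnNhd ℂ (complexMGF id (gammaMeasure a 1)) U :=
    analyticOnNhd_complexMGF.mono (fun z hz => hsub hz)
  have hY : AnalyticOnNhd ℂ (fun z : ℂ => Complex.exp (-a * Complex.log (1 - z))) U := by
    refine DifferentiableOn.analyticOnNhd (fun z hz => ?_) hUo
    have hs : (1 - z) ∈ Complex.slitPlane := by
      left
      simp only [Complex.sub_re, Complex.one_re]
      exact sub_pos.mpr hz
    refine DifferentiableAt.differentiableWithinAt ?_
    exact (((differentiableAt_id.const_sub 1).clog hs).const_mul _).cexp
  have hUc : IsPreconnected U := (convex_halfSpace_re_lt 1).isPreconnected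
  have heq := AnalyticOnNhd.eqOn_of_preconnected_of_frequently_eq hX hY hUc
    (z₀ := (0 : ℂ)) (by simp [hU]) ?_
  · have := heq (x := (t * Complex.I : ℂ)) (by simp [hU])
    rw [complexMGF_id_mul_I] at this
    simpa using this
  · have h_ev : ∀ᶠ (x : ℝ) in nhdsWithin 0 {0}ᶜ,
        complexMGF id (gammaMeasure a 1) x = Complex.exp (-a * Complex.log (1 - x)) := by
      have : ∀ᶠ (x : ℝ) in nhdsWithin 0 {0}ᶜ, x < 1 :=
        mem_nhdsWithin_of_mem_nhds (Iio_mem_nhds one_pos)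
      filter_upwards [this] with x hx
      rw [complexMGF_ofReal, gamma_mgf a x ha hx, Real.rpow_def_of_pos (by linarith)]
      push_cast
      rw [Complex.ofReal_log (by linarith)]
      push_cast
      ring_nf
    have h_real := h_ev.frequently
    rw [Filter.frequently_iff_seq_forall] at h_real ⊢
    obtain ⟨xs, hx_tendsto, hx_eq⟩ := h_real
    refine ⟨fun n ↦ xs n, ?_, fun n ↦ ?_⟩
    · rw [tendsto_nhdsWithin_iff] at hx_tendsto ⊢
      constructor
      · have := hx_tendsto.1
        rw [← Complex.ofReal_zero]
        exact (Complex.continuous_ofReal.tendsto _).comp this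
      · simpa using hx_tendsto.2
    · simpa using hx_eq n

/-- law of the weighted sum of gammas -/
def lawS {n : ℕ} (α x : Fin n → ℝ) : Measure ℝ :=
  (Measure.pi (fun j => gammaMeasure (α j) 1)).map (fun y => ∑ j, x j * y j)

lemma measurable_lin {n : ℕ} (d : Fin n → ℝ) : Measurable (fun y : Fin n → ℝ => ∑ j, d j * y j) :=
    Finset.measurable_sum _ fun j _ => (measurable_pi_apply j).const_mul _

lemma isProb_lawS {n : ℕ} (α x : Fin n → ℝ) (hα : ∀ i, 0 < α i) :
    IsProbabilityMeasure (lawS α x) := by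
  have : ∀ j, IsProbabilityMeasure (gammaMeasure (α j) 1) := fun j =>
    isProbabilityMeasure_gammaMeasure (hα j) one_pos
  exact Measure.isProbabilityMeasure_map (measurable_lin x).aemeasurable

lemma charFun_lawS {n : ℕ} (α x : Fin n → ℝ) (hα : ∀ i, 0 < α i) (t : ℝ) :
    charFun (lawS α x) t =
      Complex.exp (∑ j, (-α j * Complex.log (1 - (x j * t : ℝ) * Complex.I))) := by
  have : ∀ j, IsProbabilityMeasure (gammaMeasure (α j) 1) := fun j =>
    isProbabilityMeasure_gammaMeasure (hα j) one_pos
  rw [charFun_apply_real, lawS, integral_map (measurable_lin x).aemeasurable (by fun_prop),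
    Complex.exp_sum]
  simp_rw [← gamma_charFun _ _ (hα _), charFun_apply_real]
  rw [← integral_fintype_prod_eq_prod (𝕜 := ℂ)
    (fun j (v : ℝ) => Complex.exp ((x j * t : ℝ) * v * Complex.I))]
  refine integral_congr_ae (ae_of_all _ fun y => ?_)
  simp only
  rw [← Complex.exp_sum]
  congr 1
  push_cast
  rw [Finset.mul_sum, Finset.sum_mul]
  refine Finset.sum_congr rfl fun j _ => ?_
  ring

lemma lawS_update {m : ℕ} (α x : Fin (m+1) → ℝ) (hα : ∀ i, 0 < α i) :
    lawS (Function.update α (Fin.last m) (α (Fin.last m) + 1)) x =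
      (lawS α x).conv ((gammaMeasure 1 1).map (fun v => x (Fin.last m) * v)) := by
  have hβ : ∀ i, 0 < Function.update α (Fin.last m) (α (Fin.last m) + 1) i := by
    intro i
    by_cases h : i = Fin.last m
    · subst h; simp; linarith [hα (Fin.last m)]
    · rw [Function.update_of_ne h]; exact hα i
  have := isProb_lawS α x hα
  have := isProb_lawS _ x hβ
  have : IsProbabilityMeasure (gammaMeasure 1 1) := isProbabilityMeasure_gammaMeasure one_pos one_pos
  have : IsProbabilityMeasure ((gammaMeasure 1 1).map (fun v => x (Fin.last m) * v)) :=
    Measure.isProbabilityMeasure_map (measurable_const_mul _).aemeasurable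
  refine Measure.ext_of_charFun (funext fun t => ?_)
  rw [charFun_conv, charFun_lawS _ _ hβ, charFun_lawS _ _ hα, charFun_map_mul,
    gamma_charFun _ _ one_pos, ← Complex.exp_add, Fin.sum_univ_castSucc, Fin.sum_univ_castSucc]
  congr 1
  rw [Function.update_self]
  have : ∀ i : Fin m, Function.update α (Fin.last m) (α (Fin.last m) + 1) i.castSucc = α i.castSucc :=
    fun i => Function.update_of_ne (Fin.castSucc_lt_last i).ne _ _
  simp only [this]
  push_cast
  ring

/-- the test function -/
def gfun (x : ℝ) (v : ℝ) : ℝ := if 0 ≤ v then Real.exp (-v) else Real.exp (v / x)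

lemma measurable_gfun (x : ℝ) : Measurable (gfun x) :=
  Measurable.ite measurableSet_Ici (by fun_prop) (by fun_prop)

lemma gfun_inner (x : ℝ) (hx : 0 < x) (v : ℝ) :
    ∫⁻ e, (if 0 ≤ v + e then ENNReal.ofReal (Real.exp (-(v + e))) else 0)
      ∂((gammaMeasure 1 1).map (fun v => x * v)) = ENNReal.ofReal (1 / (1 + x)) * ENNReal.ofReal (gfun x v) := by
  have hpdf : Measurable (gammaPDF 1 1) := (measurable_gammaPDFReal _ _).ennreal_ofReal
  have hm1 : Measurable (fun e : ℝ => if 0 ≤ v + e then ENNReal.ofReal (Real.exp (-(v + e))) else 0) :=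
    Measurable.ite (measurableSet_le measurable_const (by fun_prop)) (by fun_prop) measurable_const
  have hm2 : Measurable (fun e : ℝ => if 0 ≤ v + x * e then
      ENNReal.ofReal (Real.exp (-(v + x * e))) else 0) := hm1.comp (measurable_const_mul x)
  rw [lintegral_map hm1 (measurable_const_mul _), gammaMeasure,
    lintegral_withDensity_eq_lintegral_mul _ hpdf hm2]
  set c : ℝ := max 0 (-v / x) with hc
  have e1 : ∀ e : ℝ, (gammaPDF 1 1 * fun e => (if 0 ≤ v + x * e then ENNReal.ofReal (Real.exp (-(v + x * e))) else 0)) e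
      = (Ici c).indicator (fun e => ENNReal.ofReal (Real.exp (-v) * Real.exp (-(1 + x) * e))) e := by
    intro e
    simp only [Pi.mul_apply]
    by_cases he : c ≤ e
    · have h0 : 0 ≤ e := le_trans (le_max_left _ _) he
      have h1 : -v / x ≤ e := le_trans (le_max_right _ _) he
      rw [div_le_iff₀ hx] at h1
      rw [Set.indicator_of_mem (by exact he), if_pos (by linarith), gammaPDF_of_nonneg h0,
        ← ENNReal.ofReal_mul (by simp; positivity)]
      congr 1
      simp
      rw [← Real.exp_add, ← Real.exp_add]
      ring_nf
    · rw [Set.indicator_of_notMem (by exact he)]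
      rw [hc, max_le_iff, not_and_or] at he
      rcases he with he | he
      · rw [gammaPDF_of_neg (not_le.mp he), zero_mul]
      · rw [div_le_iff₀ hx] at he
        rw [if_neg (by linarith), mul_zero]
  rw [lintegral_congr e1, lintegral_indicator measurableSet_Ici,
    setLIntegral_congr Ioi_ae_eq_Ici.symm,
    ← ofReal_integral_eq_lintegral_ofReal, ← ENNReal.ofReal_mul (by positivity)]
  · congr 1
    rw [integral_const_mul, integral_exp_mul_Ioi (by linarith)]
    unfold gfun
    split_ifs with h
    · have : c = 0 := max_eq_left (by rw [neg_div]; have := div_nonneg h hx.le; linarith)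
      rw [this, mul_zero, Real.exp_zero, neg_div_neg_eq]; ring
    · have : c = -v / x := max_eq_right (div_nonneg (by linarith) hx.le)
      have e2 : Real.exp (v / x) = Real.exp (-v) * Real.exp (-(1 + x) * (-v / x)) := by
        rw [← Real.exp_add]; congr 1; field_simp; ring
      rw [this, e2]
      field_simp
  · exact (integrableOn_exp_mul_Ioi (by linarith) c).const_mul _
  · exact ae_of_all _ fun e => by positivity

lemma dirichlet_formula {m : ℕ} (α x c : Fin (m+1) → ℝ) (l : ℝ) (hl : 0 < l) (hα : ∀ i, 0 < α i)
    (hx : ∀ i, -1 < x i) (hc : ∀ i, l * (c i * (1 + x i)) = x i) (hxm : 0 < x (Fin.last m)) :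
    (Measure.pi (fun j => gammaMeasure
      (Function.update α (Fin.last m) (α (Fin.last m) + 1) j) 1)) {y | 0 ≤ ∑ j, c j * y j} =
    ENNReal.ofReal (∏ j, (1 + x j) ^ (α j)) *
      ∫⁻ v, ENNReal.ofReal (gfun (x (Fin.last m)) v) ∂(lawS α x) := by
  set β := Function.update α (Fin.last m) (α (Fin.last m) + 1) with hβd
  have hβ : ∀ i, 0 < β i := by
    intro i
    by_cases h : i = Fin.last m
    · subst h; simp [hβd]; linarith [hα (Fin.last m)]
    · rw [hβd, Function.update_of_ne h]; exact hα i
  have : IsProbabilityMeasure (gammaMeasure 1 1) := isProbabilityMeasure_gammaMeasure one_pos one_pos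
  have : IsProbabilityMeasure ((gammaMeasure 1 1).map (fun v => x (Fin.last m) * v)) :=
    Measure.isProbabilityMeasure_map (measurable_const_mul _).aemeasurable
  have hm1 : Measurable (fun e : ℝ => if 0 ≤ e then ENNReal.ofReal (Real.exp (-e)) else 0) :=
    Measurable.ite (measurableSet_le measurable_const (by fun_prop)) (by fun_prop) measurable_const
  rw [tilt_gamma (m+1) β x c l hl hβ hx hc]
  have e1 := lintegral_map (μ := Measure.pi (fun j => gammaMeasure (β j) 1)) hm1 (measurable_lin x)
  rw [← e1]
  change _ * ∫⁻ a, _ ∂(lawS β x) = _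
  rw [hβd, lawS_update α x hα, Measure.lintegral_conv hm1]
  simp_rw [gfun_inner _ hxm]
  rw [lintegral_const_mul _ (measurable_gfun _).ennreal_ofReal, ← mul_assoc]
  congr 1
  have hr : ∀ j, 0 < 1 + x j := fun j => by linarith [hx j]
  rw [← ENNReal.ofReal_mul (Finset.prod_nonneg fun j _ => Real.rpow_nonneg (hr j).le _)]
  congr 1
  rw [Fin.prod_univ_castSucc, Fin.prod_univ_castSucc, Function.update_self]
  have : ∀ i : Fin m, Function.update α (Fin.last m) (α (Fin.last m) + 1) i.castSucc = α i.castSucc :=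
    fun i => Function.update_of_ne (Fin.castSucc_lt_last i).ne _ _
  simp only [this]
  rw [Real.rpow_add_one (hr _).ne']
  have := hr (Fin.last m)
  field_simp


lemma gfun_nonneg (x v : ℝ) : 0 ≤ gfun x v := by
  unfold gfun; split_ifs <;> positivity

lemma continuous_gfun (x : ℝ) : Continuous (gfun x) := by
  unfold gfun
  refine Continuous.if_le (by fun_prop) (by fun_prop) continuous_const continuous_id ?_
  intro v hv
  rw [← hv]; simp

lemma gfun_le_one (x : ℝ) (hx : 0 < x) (v : ℝ) : gfun x v ≤ 1 := by
  unfold gfun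
  split_ifs with h
  · exact Real.exp_le_one_iff.mpr (by linarith)
  · exact Real.exp_le_one_iff.mpr (div_nonpos_of_nonpos_of_nonneg (by linarith) hx.le)

/-- the Fourier transform of the test function -/
def ghat (x t : ℝ) : ℂ := (1 + x) / ((1 + t * Complex.I) * (1 - x * t * Complex.I))

lemma gfun_pieces (x : ℝ) (hx : 0 < x) (w : ℝ) :
    IntegrableOn (fun v : ℝ => Complex.exp (↑(-2 * π * v * w) * Complex.I) • (gfun x v : ℂ)) (Iic 0) ∧
    IntegrableOn (fun v : ℝ => Complex.exp (↑(-2 * π * v * w) * Complex.I) • (gfun x v : ℂ)) (Ioi 0) ∧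
    (∫ v in Iic 0, Complex.exp (↑(-2 * π * v * w) * Complex.I) • (gfun x v : ℂ)) +
    (∫ v in Ioi 0, Complex.exp (↑(-2 * π * v * w) * Complex.I) • (gfun x v : ℂ)) = ghat x (2 * π * w) := by
  have e1 : EqOn (fun v : ℝ => Complex.exp (↑(-2 * π * v * w) * Complex.I) • (gfun x v : ℂ))
      (fun v : ℝ => Complex.exp (((1 / x : ℝ) - (2 * π * w : ℝ) * Complex.I) * v)) (Iic 0) := by
    intro v hv
    have : gfun x v = Real.exp (v / x) := by
      unfold gfun
      split_ifs with h
      · have : v = 0 := le_antisymm hv h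
        simp [this]
      · rfl
    simp only [this, smul_eq_mul, Complex.ofReal_exp, ← Complex.exp_add]
    congr 1; push_cast; ring
  have e2 : EqOn (fun v : ℝ => Complex.exp (↑(-2 * π * v * w) * Complex.I) • (gfun x v : ℂ))
      (fun v : ℝ => Complex.exp ((-1 - (2 * π * w : ℝ) * Complex.I) * v)) (Ioi 0) := by
    intro v hv
    have : gfun x v = Real.exp (-v) := by
      unfold gfun
      rw [if_pos (le_of_lt hv)]
    simp only [this, smul_eq_mul, Complex.ofReal_exp, ← Complex.exp_add]
    congr 1; push_cast; ring
  have r1 : 0 < (((1 / x : ℝ) - (2 * π * w : ℝ) * Complex.I) : ℂ).re := by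
    rw [Complex.sub_re, Complex.re_ofReal_mul, Complex.ofReal_re, Complex.I_re]
    simpa using hx
  have r2 : ((-1 - (2 * π * w : ℝ) * Complex.I) : ℂ).re < 0 := by
    rw [Complex.sub_re, Complex.re_ofReal_mul, Complex.I_re]
    simp
  refine ⟨?_, ?_, ?_⟩
  · exact (integrableOn_exp_mul_complex_Iic r1 0).congr_fun e1.symm measurableSet_Iic
  · exact (integrableOn_exp_mul_complex_Ioi r2 0).congr_fun e2.symm measurableSet_Ioi
  · rw [setIntegral_congr_fun measurableSet_Iic e1, setIntegral_congr_fun measurableSet_Ioi e2,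
      integral_exp_mul_complex_Iic r1, integral_exp_mul_complex_Ioi r2]
    have n1 : (((1 / x : ℝ) - (2 * π * w : ℝ) * Complex.I) : ℂ) ≠ 0 := fun h => by
      rw [h] at r1; simp at r1
    have n2 : ((-1 - (2 * π * w : ℝ) * Complex.I) : ℂ) ≠ 0 := fun h => by
      rw [h] at r2; simp at r2
    have hx' : (x : ℂ) ≠ 0 := by exact_mod_cast hx.ne'
    have n3 : (1 + (2 * π * w : ℝ) * Complex.I : ℂ) ≠ 0 := fun h => n2 (by linear_combination -h)
    have n4 : (1 - x * (2 * π * w : ℝ) * Complex.I : ℂ) ≠ 0 := fun h => n1 (by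
      push_cast at h ⊢
      field_simp
      linear_combination h)
    unfold ghat
    simp only [Complex.ofReal_zero, mul_zero, Complex.exp_zero]
    have q1 : (1 : ℂ) / ((1 / x : ℝ) - (2 * π * w : ℝ) * Complex.I) = x / (1 - x * (2 * π * w : ℝ) * Complex.I) := by
      rw [div_eq_div_iff n1 n4]
      push_cast
      field_simp
    have q2 : (-1 : ℂ) / (-1 - (2 * π * w : ℝ) * Complex.I) = 1 / (1 + (2 * π * w : ℝ) * Complex.I) := by
      rw [div_eq_div_iff n2 n3]; ring
    rw [q1, q2]
    field_simp
    ring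

lemma norm_one_add_mul_I (a : ℝ) : ‖(1 + a * Complex.I : ℂ)‖ = √(1 + a ^ 2) := by
  have := Complex.norm_add_mul_I 1 a
  simpa using this

lemma norm_ghat (x t : ℝ) (hx : 0 < x) :
    ‖ghat x t‖ = (1 + x) / (√(1 + t ^ 2) * √(1 + (x * t) ^ 2)) := by
  unfold ghat
  rw [norm_div, norm_mul, norm_one_add_mul_I]
  have : (1 - x * t * Complex.I : ℂ) = 1 + ((-(x * t) : ℝ) : ℂ) * Complex.I := by push_cast; ring
  rw [this, norm_one_add_mul_I, neg_sq]
  congr 1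
  have : (1 + x : ℂ) = ((1 + x : ℝ) : ℂ) := by push_cast; rfl
  rw [this, Complex.norm_real, Real.norm_of_nonneg (by linarith)]

lemma norm_ghat_le (x t : ℝ) (hx : 0 < x) : ‖ghat x t‖ ≤ (1 + x) / √(1 + t ^ 2) := by
  rw [norm_ghat x t hx]
  have h1 : 0 < √(1 + t ^ 2) := Real.sqrt_pos.mpr (by positivity)
  have h2 : 1 ≤ √(1 + (x * t) ^ 2) := Real.one_le_sqrt.mpr (by nlinarith [sq_nonneg (x * t)])
  gcongr
  nlinarith

lemma continuous_ghat (x : ℝ) : Continuous (ghat x) := by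
  unfold ghat
  refine Continuous.div (by fun_prop) (by fun_prop) ?_
  intro t
  have a1 : (1 + t * Complex.I : ℂ) ≠ 0 := by
    intro h
    have := congrArg Complex.re h
    simp at this
  have a2 : (1 - x * t * Complex.I : ℂ) ≠ 0 := by
    intro h
    have := congrArg Complex.re h
    simp at this
  exact mul_ne_zero a1 a2

lemma integrable_ghat (x : ℝ) (hx : 0 < x) : Integrable (ghat x) := by
  refine Integrable.mono' (g := fun t => (1 + x) / min 1 x * (1 + t ^ 2)⁻¹)
    (integrable_inv_one_add_sq.const_mul _) (continuous_ghat x).aestronglyMeasurable ?_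
  refine ae_of_all _ fun t => ?_
  rw [norm_ghat x t hx]
  have hm : 0 < min 1 x := lt_min one_pos hx
  have h1 : 0 < 1 + t ^ 2 := by positivity
  have h2 : min 1 x * √(1 + t ^ 2) ≤ √(1 + (x * t) ^ 2) := by
    apply Real.le_sqrt_of_sq_le
    rw [mul_pow, Real.sq_sqrt h1.le]
    have a : min 1 x ^ 2 ≤ 1 := by
      have := min_le_left 1 x
      nlinarith
    have b : min 1 x ^ 2 ≤ x ^ 2 := by
      have := min_le_right 1 x
      nlinarith
    nlinarith [mul_le_mul_of_nonneg_right b (sq_nonneg t)]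
  have h3 : 0 < √(1 + t ^ 2) := Real.sqrt_pos.mpr h1
  rw [← div_eq_mul_inv, div_div]
  have h4 : min 1 x * (1 + t ^ 2) ≤ √(1 + t ^ 2) * √(1 + (x * t) ^ 2) := by
    have := Real.mul_self_sqrt h1.le
    nlinarith
  gcongr

open FourierTransform in
lemma fourier_gfun (x : ℝ) (hx : 0 < x) (w : ℝ) :
    𝓕 (fun v : ℝ => (gfun x v : ℂ)) w = ghat x (2 * π * w) := by
  obtain ⟨h1, h2, h3⟩ := gfun_pieces x hx w
  rw [Real.fourier_real_eq_integral_exp_smul, ← h3]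
  have := setIntegral_union (Iic_disjoint_Ioi (le_refl (0:ℝ))) measurableSet_Ioi h1 h2
  rw [← this, Iic_union_Ioi, setIntegral_univ]

lemma integrable_gfun (x : ℝ) (hx : 0 < x) : Integrable (fun v : ℝ => (gfun x v : ℂ)) := by
  obtain ⟨h1, h2, h3⟩ := gfun_pieces x hx 0
  have := h1.union h2
  rw [Iic_union_Ioi, integrableOn_univ] at this
  simpa using this

open FourierTransform in
lemma gfun_inversion (x : ℝ) (hx : 0 < x) (v : ℝ) :
    (gfun x v : ℂ) = ∫ w : ℝ, Complex.exp ((2 * π * w * v : ℝ) * Complex.I) * ghat x (2 * π * w) := by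
  have hF : 𝓕 (fun v : ℝ => (gfun x v : ℂ)) = fun w => ghat x (2 * π * w) :=
    funext fun w => fourier_gfun x hx w
  have hc : Continuous (fun v : ℝ => (gfun x v : ℂ)) := Complex.continuous_ofReal.comp (continuous_gfun x)
  have hi : Integrable (fun w => ghat x (2 * π * w)) := (integrable_ghat x hx).comp_mul_left' (by positivity)
  have := hc.fourierInv_fourier_eq (integrable_gfun x hx) (by rw [hF]; exact hi)
  rw [hF] at this
  have := congrFun this v
  rw [← this, Real.fourierInv_eq']
  congr 1
  ext w
  simp only [smul_eq_mul]
  congr 3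
  simp
  ring

lemma integral_gfun_eq (x : ℝ) (hx : 0 < x) (ν : Measure ℝ) [IsProbabilityMeasure ν] :
    ((∫ v, gfun x v ∂ν : ℝ) : ℂ) = ∫ w : ℝ, ghat x (2 * π * w) * charFun ν (2 * π * w) := by
  rw [← integral_complex_ofReal]
  simp_rw [gfun_inversion x hx]
  have hi : Integrable (fun w => ghat x (2 * π * w)) := (integrable_ghat x hx).comp_mul_left' (by positivity)
  rw [integral_integral_swap]
  · congr 1
    ext w
    rw [integral_mul_const, mul_comm, charFun_apply_real]
    congr 2
    ext v
    push_cast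
    ring_nf
  · have h2 : Integrable (fun z : ℝ × ℝ => ghat x (2 * π * z.2)) (ν.prod volume) := hi.comp_snd ν
    refine Integrable.mono h2 ?_ ?_
    · have := continuous_ghat x
      apply Continuous.aestronglyMeasurable
      simp only [Function.uncurry_def]
      fun_prop
    · refine ae_of_all _ fun z => ?_
      simp only [Function.uncurry_def, norm_mul]
      rw [Complex.norm_exp_ofReal_mul_I, one_mul]

lemma fourier_bound (x : ℝ) (hx : 0 < x) (ν₁ ν₂ : Measure ℝ) [IsProbabilityMeasure ν₁]
    [IsProbabilityMeasure ν₂] (D : ℝ → ℝ) (hD : Integrable D)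
    (h : ∀ t, t ≠ 0 → ‖charFun ν₁ t - charFun ν₂ t‖ / √(1 + t ^ 2) ≤ D t) :
    |(∫ v, gfun x v ∂ν₁) - ∫ v, gfun x v ∂ν₂| ≤ (1 + x) * (2 * π)⁻¹ * ∫ t, D t := by
  have hi : Integrable (fun w => ghat x (2 * π * w)) := (integrable_ghat x hx).comp_mul_left' (by positivity)
  have hI : ∀ (ν : Measure ℝ) [IsProbabilityMeasure ν],
      Integrable (fun w => ghat x (2 * π * w) * charFun ν (2 * π * w)) := by
    intro ν _
    refine Integrable.mono hi ?_ ?_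
    · refine hi.aestronglyMeasurable.mul ?_
      exact ((measurable_charFun (μ := ν)).comp (measurable_const_mul (2 * π))).aestronglyMeasurable
    · refine ae_of_all _ fun w => ?_
      rw [norm_mul]
      exact mul_le_of_le_one_right (norm_nonneg _) (norm_charFun_le_one _)
  have e : ‖(((∫ v, gfun x v ∂ν₁) - ∫ v, gfun x v ∂ν₂ : ℝ) : ℂ)‖ ≤
      ∫ w, (1 + x) * D (2 * π * w) := by
    rw [Complex.ofReal_sub, integral_gfun_eq x hx, integral_gfun_eq x hx,
      ← integral_sub (hI ν₁) (hI ν₂)]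
    refine norm_integral_le_of_norm_le ((hD.comp_mul_left' (by positivity)).const_mul _) ?_
    have : ∀ᵐ w : ℝ, w ≠ 0 := by simp [ae_iff]
    filter_upwards [this] with w hw
    rw [← mul_sub, norm_mul]
    have h1 := norm_ghat_le x (2 * π * w) hx
    have h2 := h (2 * π * w) (by positivity)
    calc _ ≤ (1 + x) / √(1 + (2 * π * w) ^ 2) * ‖charFun ν₁ (2 * π * w) - charFun ν₂ (2 * π * w)‖ := by gcongr
      _ = (1 + x) * (‖charFun ν₁ (2 * π * w) - charFun ν₂ (2 * π * w)‖ / √(1 + (2 * π * w) ^ 2)) := by ring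
      _ ≤ _ := by gcongr
  rw [Complex.norm_real, Real.norm_eq_abs, integral_const_mul,
    Measure.integral_comp_mul_left, abs_of_pos (a := (2 * π)⁻¹) (by positivity), smul_eq_mul] at e
  rw [mul_assoc]
  exact e


lemma slit_aux (u : ℝ) : (1 - u * Complex.I : ℂ) ∈ Complex.slitPlane := by
  left; simp

lemma norm_L_le (u : ℝ) :
    ‖Complex.log (1 - u * Complex.I) + u * Complex.I - u ^ 2 / 2‖ ≤ |u| ^ 3 / 3 := by
  let F : ℝ → ℂ := fun s => Complex.log (1 - (u * s : ℝ) * Complex.I) + (u * s : ℝ) * Complex.I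
    - (u * s : ℝ) ^ 2 / 2
  let F' : ℝ → ℂ := fun s => u * (Complex.I * (u * s : ℝ) ^ 2 / (1 - (u * s : ℝ) * Complex.I))
  have hF : ∀ s, HasDerivAt F (F' s) s := by
    intro s
    have h0 : HasDerivAt (fun s : ℝ => ((u * s : ℝ) : ℂ)) (u : ℂ) s := by
      have := ((hasDerivAt_id s).const_mul u).ofReal_comp
      simpa using this
    have h1 : HasDerivAt (fun s : ℝ => (1 - (u * s : ℝ) * Complex.I : ℂ)) (-(u * Complex.I)) s := by
      exact (h0.mul_const Complex.I).const_sub 1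
    have h2 := h1.clog_real (slit_aux (u * s))
    have h3 := (h2.add (h0.mul_const Complex.I)).sub ((h0.pow 2).div_const 2)
    refine h3.congr_deriv ?_
    have hne : (1 - (u * s : ℝ) * Complex.I : ℂ) ≠ 0 := Complex.slitPlane_ne_zero (slit_aux (u * s))
    simp only [F']
    generalize hw : ((u * s : ℝ) : ℂ) = w at hne ⊢
    have e : -(u * Complex.I) / (1 - w * Complex.I) = u * Complex.I * (w * w) / (1 - w * Complex.I)
        - u * Complex.I + u * w := by
      rw [div_eq_iff hne, add_mul, sub_mul, div_mul_cancel₀ _ hne]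
      linear_combination (-(u * w:ℂ)) * Complex.I_sq
    rw [e]
    norm_num
    ring
  let B : ℝ → ℝ := fun s => |u| ^ 3 * s ^ 3 / 3
  let B' : ℝ → ℝ := fun s => |u| ^ 3 * s ^ 2
  have hB : ∀ s, HasDerivAt B (B' s) s := by
    intro s
    have := ((hasDerivAt_pow 3 s).const_mul (|u| ^ 3)).div_const 3
    refine this.congr_deriv ?_
    simp only [B']; push_cast; ring
  have key := image_norm_le_of_norm_deriv_right_le_deriv_boundary (a := 0) (b := 1) (f := F) (f' := F')
    (fun s _ => (hF s).continuousAt.continuousWithinAt) (fun s _ => (hF s).hasDerivWithinAt)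
    (B := B) (B' := B') (by simp [F, B]) hB (by
      intro s hs
      simp only [F', B']
      rw [norm_mul, norm_div, norm_mul, Complex.norm_I, norm_pow, Complex.norm_real, Complex.norm_real,
        one_mul, Real.norm_eq_abs, Real.norm_eq_abs]
      have h1 : 1 ≤ ‖(1 - (u * s : ℝ) * Complex.I : ℂ)‖ := by
        have := Complex.abs_re_le_norm (1 - (u * s : ℝ) * Complex.I : ℂ)
        simpa using this
      have : |u * s| ^ 2 / ‖(1 - (u * s : ℝ) * Complex.I : ℂ)‖ ≤ |u * s| ^ 2 :=
        div_le_self (by positivity) h1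
      calc _ ≤ |u| * |u * s| ^ 2 := by gcongr
        _ = _ := by rw [abs_mul, mul_pow, sq_abs s]; ring)
    (x := 1) (by simp)
  simpa [F, B] using key

lemma norm_cexp_sub_le (a b : ℂ) (C : ℝ) (ha : a.re ≤ C) (hb : b.re ≤ C) :
    ‖Complex.exp a - Complex.exp b‖ ≤ Real.exp C * ‖a - b‖ := by
  refine Convex.norm_image_sub_le_of_norm_hasDerivWithin_le (f := Complex.exp) (f' := Complex.exp)
    (s := {z : ℂ | z.re ≤ C}) (fun z _ => (Complex.hasDerivAt_exp z).hasDerivWithinAt) ?_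
    (convex_halfSpace_re_le C) hb ha
  intro z hz
  rw [Complex.norm_exp]
  exact Real.exp_le_exp.mpr hz

lemma re_log_aux (u : ℝ) : (Complex.log (1 - u * Complex.I)).re = Real.log (1 + u ^ 2) / 2 := by
  rw [Complex.log_re]
  have : (1 - u * Complex.I : ℂ) = 1 + ((-u : ℝ) : ℂ) * Complex.I := by push_cast; ring
  rw [this, norm_one_add_mul_I, neg_sq, Real.log_sqrt (by positivity)]

lemma log_concave_aux (θ v : ℝ) (h0 : 0 ≤ θ) (h1 : θ ≤ 1) (hv : 0 ≤ v) :
    θ * Real.log (1 + v) ≤ Real.log (1 + θ * v) := by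
  rw [← Real.log_rpow (by linarith)]
  refine Real.log_le_log (Real.rpow_pos_of_pos (by linarith) _) ?_
  exact rpow_one_add_le_one_add_mul_self (by linarith) h0 h1

lemma re_bound {n : ℕ} (α x : Fin n → ℝ) (hα : ∀ i, 0 < α i) (R A σ t : ℝ)
    (hRp : 0 < R) (hR : ∀ j, |x j| ≤ R) (hσ2 : σ ^ 2 = ∑ j, α j * x j ^ 2) (hA : 8 ≤ A)
    (hRA : R ^ 2 * A ≤ σ ^ 2) :
    (∑ j, (-α j * Complex.log (1 - (x j * t : ℝ) * Complex.I))).re ≤ -4 * Real.log (1 + (σ * t) ^ 2 / 8) := by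
  have e : (∑ j, (-α j * Complex.log (1 - (x j * t : ℝ) * Complex.I))).re
      = -∑ j, α j * (Real.log (1 + (x j * t) ^ 2) / 2) := by
    rw [Complex.re_sum, ← Finset.sum_neg_distrib]
    refine Finset.sum_congr rfl fun j _ => ?_
    rw [← Complex.ofReal_neg, Complex.re_ofReal_mul, re_log_aux]
    ring
  rw [e]
  set v := R ^ 2 * t ^ 2 with hv
  have hv0 : 0 ≤ v := by positivity
  have h1 : ∀ j, α j * (x j ^ 2 / R ^ 2 * Real.log (1 + v) / 2) ≤ α j * (Real.log (1 + (x j * t) ^ 2) / 2) := by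
    intro j
    have hsq : x j ^ 2 ≤ R ^ 2 := by
      rw [← sq_abs (x j)]
      exact pow_le_pow_left₀ (abs_nonneg _) (hR j) 2
    have := log_concave_aux (x j ^ 2 / R ^ 2) v (by positivity) (by rw [div_le_one (by positivity)]; exact hsq) hv0
    have e3 : x j ^ 2 / R ^ 2 * v = (x j * t) ^ 2 := by rw [hv]; field_simp
    rw [e3] at this
    have := (hα j).le
    gcongr
  have h2 := Finset.sum_le_sum (s := Finset.univ) (fun j _ => h1 j)
  have h3 : ∑ j, α j * (x j ^ 2 / R ^ 2 * Real.log (1 + v) / 2) = 4 * (σ ^ 2 / (8 * R ^ 2) * Real.log (1 + v)) := by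
    rw [hσ2, Finset.sum_div, Finset.sum_mul, Finset.mul_sum]
    refine Finset.sum_congr rfl fun j _ => ?_
    field_simp
    ring
  set k := σ ^ 2 / (8 * R ^ 2) with hk
  have hk1 : 1 ≤ k := by
    rw [hk, le_div_iff₀ (by positivity)]
    nlinarith [sq_nonneg R]
  have h4 : Real.log (1 + (σ * t) ^ 2 / 8) ≤ k * Real.log (1 + v) := by
    rw [← Real.log_rpow (by linarith)]
    refine Real.log_le_log (by positivity) ?_
    have := one_add_mul_self_le_rpow_one_add (s := v) (by linarith) hk1
    refine le_trans (le_of_eq ?_) this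
    rw [hk, hv]; field_simp
  linarith

lemma poly_aux (s : ℝ) (hs : 0 ≤ s) : s ^ 3 + s ^ 2 ≤ 5 * (1 + s ^ 2 / 9) ^ 3 := by
  obtain ⟨u, rfl⟩ : ∃ u, s = 3 * u := ⟨s / 3, by ring⟩
  have hu : 0 ≤ u := by linarith
  nlinarith [sq_nonneg (u ^ 2 - u), sq_nonneg (u - 1), sq_nonneg (u ^ 2 - 1), sq_nonneg (u ^ 3 - u ^ 2),
    sq_nonneg (u ^ 3 - u), sq_nonneg (u ^ 3 - 1), sq_nonneg (5 * u ^ 2 - 4 * u), mul_nonneg hu (sq_nonneg (u-1)),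
    sq_nonneg (9 * u ^ 2 - 8 * u), sq_nonneg (u ^ 3 + u - 1)]

lemma diff_bound {m : ℕ} (α x : Fin (m+1) → ℝ) (hα : ∀ i, 0 < α i) (hsum : ∑ j, α j * x j = 0) (R A σ t : ℝ)
    (hRp : 0 < R) (hR : ∀ j, |x j| ≤ R) (hσ : 0 < σ) (hσ2 : σ ^ 2 = ∑ j, α j * x j ^ 2) (hA : 8 ≤ A)
    (hRA : R ^ 2 * A ≤ σ ^ 2) :
    ‖charFun (lawS α x) t - charFun (gaussianReal 0 (Real.toNNReal (σ ^ 2))) t‖ ≤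
     (σ * |t|) ^ 3 / (3 * √A) * ((1 + (σ * |t|) ^ 2 / 8) ^ 4)⁻¹ := by
  rw [charFun_lawS α x hα, charFun_gaussianReal]
  have hre := re_bound α x hα R A σ t hRp hR hσ2 hA hRA
  set a := ∑ j, (-α j * Complex.log (1 - (x j * t : ℝ) * Complex.I)) with ha
  set b : ℂ := t * (0 : ℝ) * Complex.I - (Real.toNNReal (σ ^ 2) : ℝ) * t ^ 2 / 2 with hb
  have hb2 : b = ((-(σ * t) ^ 2 / 2 : ℝ) : ℂ) := by
    rw [hb, Real.coe_toNNReal _ (by positivity)]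
    push_cast; ring
  have hlogb : Real.log (1 + (σ * t) ^ 2 / 8) ≤ (σ * t) ^ 2 / 8 := by
    have := Real.log_le_sub_one_of_pos (x := 1 + (σ * t) ^ 2 / 8) (by positivity)
    linarith
  have hbre : b.re ≤ -4 * Real.log (1 + (σ * t) ^ 2 / 8) := by
    rw [hb2, Complex.ofReal_re]; linarith
  have hexp : Real.exp (-4 * Real.log (1 + (σ * t) ^ 2 / 8)) = ((1 + (σ * |t|) ^ 2 / 8) ^ 4)⁻¹ := by
    have : (0:ℝ) < 1 + (σ * t) ^ 2 / 8 := by positivity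
    rw [neg_mul, Real.exp_neg, show (4:ℝ) * Real.log (1 + (σ * t) ^ 2 / 8) = ((4:ℕ):ℝ) * Real.log (1 + (σ * t) ^ 2 / 8) by norm_num,
      Real.exp_nat_mul, Real.exp_log this, mul_pow, mul_pow, sq_abs]
  have key := norm_cexp_sub_le a b _ hre hbre
  rw [hexp] at key
  have hab : a - b = -∑ j, α j * (Complex.log (1 - (x j * t : ℝ) * Complex.I) + (x j * t : ℝ) * Complex.I - (x j * t : ℝ) ^ 2 / 2) := by
    have hs : (∑ j, (α j : ℂ) * x j) = 0 := by exact_mod_cast hsum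
    have hs2 : (∑ j, (α j : ℂ) * x j ^ 2) = (σ : ℂ) ^ 2 := by exact_mod_cast hσ2.symm
    have : ∑ j, (α j : ℂ) * (Complex.log (1 - (x j * t : ℝ) * Complex.I) + (x j * t : ℝ) * Complex.I - (x j * t : ℝ) ^ 2 / 2)
       = ∑ j, (α j : ℂ) * Complex.log (1 - (x j * t : ℝ) * Complex.I) + (∑ j, (α j : ℂ) * x j) * (t * Complex.I)
         - (∑ j, (α j : ℂ) * x j ^ 2) * (t ^ 2 / 2) := by
      rw [Finset.sum_mul, Finset.sum_mul, ← Finset.sum_add_distrib, ← Finset.sum_sub_distrib]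
      refine Finset.sum_congr rfl fun j _ => ?_
      push_cast; ring
    rw [this, hs, hs2, hb2, ha]
    simp only [neg_mul, Finset.sum_neg_distrib]
    push_cast; ring
  have hnorm : ‖a - b‖ ≤ (σ * |t|) ^ 3 / (3 * √A) := by
    rw [hab, norm_neg]
    have hAp : 0 < √A := Real.sqrt_pos.mpr (by linarith)
    have hRs : R * √A ≤ σ := by
      apply le_of_sq_le_sq _ hσ.le
      rw [mul_pow, Real.sq_sqrt (by linarith)]; exact hRA
    calc _ ≤ ∑ j, ‖(α j : ℂ) * (Complex.log (1 - (x j * t : ℝ) * Complex.I) + (x j * t : ℝ) * Complex.I - (x j * t : ℝ) ^ 2 / 2)‖ := norm_sum_le _ _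
      _ ≤ ∑ j, α j * x j ^ 2 * (R * |t| ^ 3 / 3) := by
        refine Finset.sum_le_sum fun j _ => ?_
        rw [norm_mul, Complex.norm_real, Real.norm_of_nonneg (hα j).le, mul_assoc]
        have := (hα j).le
        gcongr
        refine (norm_L_le (x j * t)).trans ?_
        rw [abs_mul, mul_pow, ← sq_abs (x j)]
        have := hR j
        calc |x j| ^ 3 * |t| ^ 3 / 3 = |x j| ^ 2 * (|x j| * |t| ^ 3 / 3) := by ring
          _ ≤ _ := by gcongr
      _ = σ ^ 2 * |t| ^ 3 / 3 * R := by rw [← Finset.sum_mul, ← hσ2]; ring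
      _ ≤ σ ^ 2 * |t| ^ 3 / 3 * (σ / √A) := by
        gcongr
        rw [le_div_iff₀ hAp]; exact hRs
      _ = _ := by field_simp
  calc _ ≤ _ := key
    _ ≤ ((1 + (σ * |t|) ^ 2 / 8) ^ 4)⁻¹ * ((σ * |t|) ^ 3 / (3 * √A)) := by gcongr
    _ = _ := mul_comm _ _

lemma err_bound {m : ℕ} (α x : Fin (m+1) → ℝ) (hα : ∀ i, 0 < α i) (hsum : ∑ j, α j * x j = 0) (R A σ : ℝ)
    (hRp : 0 < R) (hR : ∀ j, |x j| ≤ R) (hσ : 0 < σ) (hσ2 : σ ^ 2 = ∑ j, α j * x j ^ 2) (hA : 8 ≤ A)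
    (hRA : R ^ 2 * A ≤ σ ^ 2) (y : ℝ) (hy : 0 < y) :
    |(∫ v, gfun y v ∂(lawS α x)) - ∫ v, gfun y v ∂(gaussianReal 0 (Real.toNNReal (σ ^ 2)))| ≤
      (1 + y) * (5 / 2 * √2) / ((1 + σ) * √A) := by
  have := isProb_lawS α x hα
  have hAp : 0 < √A := Real.sqrt_pos.mpr (by linarith)
  have h2p : 0 < √2 := Real.sqrt_pos.mpr (by norm_num)
  set D : ℝ → ℝ := fun t => √2 * σ / (1 + σ) * (5 / (3 * √A)) * (1 + (σ / 3 * t) ^ 2)⁻¹ with hD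
  have hDi : Integrable D := (integrable_inv_one_add_sq.comp_mul_left' (by positivity)).const_mul _
  have hDint : ∫ t, D t = √2 * σ / (1 + σ) * (5 / (3 * √A)) * (3 / σ * π) := by
    rw [hD, integral_const_mul, Measure.integral_comp_mul_left (fun t : ℝ => (1 + t ^ 2)⁻¹), integral_univ_inv_one_add_sq,
      abs_of_pos (by positivity), smul_eq_mul, inv_div]
  have key := fourier_bound y hy (lawS α x) (gaussianReal 0 (Real.toNNReal (σ ^ 2))) D hDi ?_
  · rw [hDint] at key
    refine key.trans (le_of_eq ?_)
    have := Real.pi_pos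
    field_simp
  · intro t ht
    have htp : 0 < |t| := abs_pos.mpr ht
    have h1 := diff_bound α x hα hsum R A σ t hRp hR hσ hσ2 hA hRA
    have hq : 0 < √(1 + t ^ 2) := Real.sqrt_pos.mpr (by positivity)
    have h2 : (1 + |t|) ≤ √2 * √(1 + t ^ 2) := by
      rw [← Real.sqrt_mul (by norm_num)]
      apply Real.le_sqrt_of_sq_le
      rw [← sq_abs t]
      nlinarith [sq_nonneg (|t| - 1)]
    set τ := σ * |t| with hτ
    have hτp : 0 < τ := by positivity
    have h3 : (√(1 + t ^ 2))⁻¹ ≤ √2 * σ / (1 + σ) * (1 + 1 / τ) := by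
      have : √2 * σ / (1 + σ) * (1 + 1 / τ) = √2 * (1 + τ) / ((1 + σ) * |t|) := by
        rw [hτ]; field_simp; ring
      rw [this, inv_le_comm₀ hq (by positivity), inv_div, div_le_iff₀ (by positivity)]
      have h4 : (1 + σ) * |t| ≤ (1 + |t|) * (1 + τ) := by rw [hτ]; nlinarith [mul_pos hσ htp, mul_pos (mul_pos hσ htp) htp]
      calc (1 + σ) * |t| ≤ (1 + |t|) * (1 + τ) := h4
        _ ≤ (√2 * √(1 + t ^ 2)) * (1 + τ) := by gcongr
        _ = _ := by ring
    rw [div_eq_mul_inv]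
    calc _ ≤ (τ ^ 3 / (3 * √A) * ((1 + τ ^ 2 / 8) ^ 4)⁻¹) * (√2 * σ / (1 + σ) * (1 + 1 / τ)) := by gcongr
      _ = √2 * σ / (1 + σ) * ((τ ^ 3 + τ ^ 2) / (3 * √A) * ((1 + τ ^ 2 / 8) ^ 4)⁻¹) := by
        field_simp
      _ ≤ √2 * σ / (1 + σ) * (5 * (1 + τ ^ 2 / 9) ^ 3 / (3 * √A) * ((1 + τ ^ 2 / 9) ^ 4)⁻¹) := by
        have := poly_aux τ hτp.le
        gcongr
        norm_num
      _ = D t := by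
        have e5 : (σ / 3 * t) ^ 2 = τ ^ 2 / 9 := by rw [hτ, mul_pow, mul_pow, sq_abs]; ring
        rw [hD]; simp only []
        rw [e5]
        field_simp


/-- unnormalised Mills ratio -/
def Nfun (s : ℝ) : ℝ := ∫ u in Ioi (0:ℝ), Real.exp (-s * u) * Real.exp (-u ^ 2 / 2)

lemma Nfun_int (s : ℝ) : Integrable (fun u => Real.exp (-s * u) * Real.exp (-u ^ 2 / 2)) := by
  have h := (integrable_exp_neg_mul_sq (b := 1/2) (by norm_num)).comp_add_right s
  have h2 := h.const_mul (Real.exp (s ^ 2 / 2))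
  refine h2.congr (ae_of_all _ fun u => ?_)
  simp only [← Real.exp_add]
  congr 1; ring

lemma Nfun_anti (s t : ℝ) (h : s ≤ t) : Nfun t ≤ Nfun s := by
  refine setIntegral_mono_on (Nfun_int t).integrableOn (Nfun_int s).integrableOn measurableSet_Ioi ?_
  intro u hu
  have hu' : 0 < u := hu
  gcongr

lemma Nfun_nonneg (s : ℝ) : 0 ≤ Nfun s :=
  setIntegral_nonneg measurableSet_Ioi fun u _ => by positivity

lemma Nfun_scale (s c : ℝ) (hc : 1 ≤ c) : Nfun (s / c) ≤ c * Nfun s := by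
  have hc0 : 0 < c := by linarith
  have h := integral_comp_mul_left_Ioi (fun u => Real.exp (-(s / c) * u) * Real.exp (-u ^ 2 / 2)) 0 hc0
  rw [mul_zero, smul_eq_mul] at h
  have e : Nfun (s / c) = c * ∫ u in Ioi (0:ℝ), Real.exp (-(s / c) * (c * u)) * Real.exp (-(c * u) ^ 2 / 2) := by
    rw [h, ← mul_assoc, mul_inv_cancel₀ hc0.ne', one_mul]; rfl
  rw [e]
  refine mul_le_mul_of_nonneg_left ?_ hc0.le
  refine setIntegral_mono_on ((Nfun_int (s / c)).comp_mul_left' hc0.ne').integrableOn (Nfun_int s).integrableOn measurableSet_Ioi ?_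
  intro u hu
  rw [show -(s / c) * (c * u) = -s * u by field_simp]
  refine mul_le_mul_of_nonneg_left (Real.exp_le_exp.mpr ?_) (Real.exp_pos _).le
  nlinarith [mul_nonneg (sq_nonneg u) (by nlinarith : 0 ≤ c ^ 2 - 1)]

lemma Nfun_le (s : ℝ) (hs : 0 < s) : Nfun s ≤ 1 / s := by
  have h := integral_exp_mul_Ioi (a := -s) (by linarith) 0
  rw [mul_zero, Real.exp_zero, neg_div_neg_eq] at h
  rw [← h]
  refine setIntegral_mono_on (Nfun_int s).integrableOn (integrableOn_exp_mul_Ioi (by linarith) 0) measurableSet_Ioi ?_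
  intro u hu
  refine mul_le_of_le_one_right (Real.exp_pos _).le (Real.exp_le_one_iff.mpr ?_)
  nlinarith [sq_nonneg u]

lemma Nfun_ge (r : ℝ) (hr : 0 < r) : 1 / r - 1 / r ^ 3 ≤ Nfun r := by
  have h := integral_exp_mul_Ioi (a := -r) (by linarith) 0
  rw [mul_zero, Real.exp_zero, neg_div_neg_eq] at h
  have hi := integrableOn_exp_mul_Ioi (a := -r) (by linarith) 0
  have h2i : IntegrableOn (fun u : ℝ => u ^ 2 * Real.exp (-r * u)) (Ioi 0) := by
    have := integrableOn_rpow_mul_exp_neg_mul_rpow (p := 1) (s := 2) (b := r) (by norm_num) one_pos hr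
    simpa using this
  have h2 : ∫ u in Ioi (0:ℝ), u ^ 2 * Real.exp (-r * u) = 2 / r ^ 3 := by
    have := integral_rpow_mul_exp_neg_mul_Ioi (a := 3) (r := r) (by norm_num) hr
    rw [show (3:ℝ) - 1 = ((2:ℕ):ℝ) by norm_num] at this
    simp only [Real.rpow_natCast] at this
    rw [show (3:ℝ) = ((2:ℕ):ℝ) + 1 by norm_num, Real.Gamma_nat_eq_factorial, show ((2:ℕ):ℝ) + 1 = ((3:ℕ):ℝ) by norm_num,
      Real.rpow_natCast] at this
    simp only [neg_mul]
    rw [this]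
    simp
    ring
  have h3 : 1 / r - 1 / r ^ 3 = ∫ u in Ioi (0:ℝ), (Real.exp (-r * u) - 1/2 * (u ^ 2 * Real.exp (-r * u))) := by
    rw [integral_sub hi (h2i.const_mul _), integral_const_mul, h, h2]; ring
  rw [h3]
  refine setIntegral_mono_on (hi.sub (h2i.const_mul _)) (Nfun_int r).integrableOn measurableSet_Ioi ?_
  intro u hu
  have h5 := Real.add_one_le_exp (-u ^ 2 / 2)
  have := mul_le_mul_of_nonneg_left h5 (Real.exp_pos (-r * u)).le
  linarith

lemma Nfun_ge' (s : ℝ) (hs : 0 < s) : Real.exp (-(1/2)) / (1 + s) ≤ Nfun s := by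
  have h1 : ∫ u in Ioc (0:ℝ) 1, Real.exp (-s * u) * Real.exp (-(1/2)) = (1 - Real.exp (-s)) / s * Real.exp (-(1/2)) := by
    rw [integral_mul_const, ← intervalIntegral.integral_of_le zero_le_one]
    have := intervalIntegral.integral_comp_mul_left (a := 0) (b := 1) (fun u => Real.exp u) (c := -s) (by linarith)
    rw [this, integral_exp]; simp; ring
  have hint : IntegrableOn (fun u : ℝ => Real.exp (-s * u) * Real.exp (-(1/2))) (Ioc 0 1) :=
    (Continuous.integrableOn_Icc (by fun_prop)).mono_set Ioc_subset_Icc_self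
  have h2 : ∫ u in Ioc (0:ℝ) 1, Real.exp (-s * u) * Real.exp (-(1/2)) ≤
      ∫ u in Ioc (0:ℝ) 1, Real.exp (-s * u) * Real.exp (-u ^ 2 / 2) := by
    refine setIntegral_mono_on hint (Nfun_int s).integrableOn measurableSet_Ioc ?_
    intro u hu
    refine mul_le_mul_of_nonneg_left (Real.exp_le_exp.mpr ?_) (Real.exp_pos _).le
    nlinarith [hu.1, hu.2]
  have h3 : ∫ u in Ioc (0:ℝ) 1, Real.exp (-s * u) * Real.exp (-u ^ 2 / 2) ≤ Nfun s := by
    refine setIntegral_mono_set (Nfun_int s).integrableOn (ae_of_all _ fun u => by positivity) ?_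
    exact Ioc_subset_Ioi_self.eventuallyLE
  have h4 : 1 / (1 + s) ≤ (1 - Real.exp (-s)) / s := by
    rw [div_le_div_iff₀ (by linarith) hs]
    have h5 := Real.add_one_le_exp s
    have h6 : Real.exp (-s) * Real.exp s = 1 := by rw [← Real.exp_add]; simp
    have := Real.exp_pos (-s)
    nlinarith
  have h7 := mul_le_mul_of_nonneg_right h4 (Real.exp_pos (-(1/2))).le
  have h8 : 1 / (1 + s) * Real.exp (-(1/2)) = Real.exp (-(1/2)) / (1 + s) := by ring
  linarith

/-- normalising constant -/
def kconst : ℝ := (√(2 * π))⁻¹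

lemma kconst_pos : 0 < kconst := by unfold kconst; positivity

lemma kconst_ge : 0.24 ≤ kconst * Real.exp (-(1/2)) := by
  have h1 : (kconst * Real.exp (-(1/2))) ^ 2 * (2 * π * Real.exp 1) = 1 := by
    have : Real.exp (-(1/2)) ^ 2 * Real.exp 1 = 1 := by
      rw [← Real.exp_nat_mul, ← Real.exp_add]; norm_num
    have h2 : kconst ^ 2 * (2 * π) = 1 := by
      unfold kconst
      rw [inv_pow, Real.sq_sqrt (by positivity)]
      have := Real.pi_pos
      field_simp
    calc _ = (kconst ^ 2 * (2 * π)) * (Real.exp (-(1/2)) ^ 2 * Real.exp 1) := by ring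
      _ = 1 := by rw [this, h2, one_mul]
  have h3 : 2 * π * Real.exp 1 ≤ 17.2 := by
    have := Real.pi_lt_d4
    have := Real.exp_one_lt_d9
    have := Real.pi_pos
    have := Real.exp_pos 1
    nlinarith
  set q := kconst * Real.exp (-(1/2)) with hq
  have hqp : 0 < q := mul_pos kconst_pos (Real.exp_pos _)
  by_contra hcon
  push Not at hcon
  have : q ^ 2 ≤ 0.24 ^ 2 := by nlinarith
  nlinarith [sq_nonneg q]

lemma pdf_eq (u : ℝ) : gaussianPDFReal 0 1 u = kconst * Real.exp (-u ^ 2 / 2) := by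
  unfold gaussianPDFReal kconst
  simp

lemma gauss_tail (z : ℝ) :
    gaussianReal 0 1 {x | z ≤ x} = ENNReal.ofReal (Real.exp (-z ^ 2 / 2) * (kconst * Nfun z)) := by
  rw [gaussianReal_apply_eq_integral 0 one_ne_zero]
  congr 1
  change ∫ x in Ici z, _ = _
  rw [integral_Ici_eq_integral_Ioi]
  have := (measurePreserving_add_right volume z).setIntegral_preimage_emb (measurableEmbedding_addRight z)
    (gaussianPDFReal 0 1) (Ioi z)
  rw [← this]
  have e : (fun x => x + z) ⁻¹' Ioi z = Ioi 0 := by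
    ext x; simp
  rw [e]
  unfold Nfun
  rw [← integral_const_mul, ← integral_const_mul]
  congr 1
  ext u
  rw [pdf_eq]
  rw [← Real.exp_add, mul_left_comm, ← Real.exp_add]
  congr 2
  ring

lemma gauss_gfun (σ y : ℝ) (hσ : 0 < σ) (hy : 0 < y) :
    ∫ v, gfun y v ∂(gaussianReal 0 (Real.toNNReal (σ ^ 2))) = kconst * (Nfun σ + Nfun (σ / y)) := by
  have h1 : gaussianReal 0 (Real.toNNReal (σ ^ 2)) = (gaussianReal 0 1).map (σ * ·) := by
    rw [gaussianReal_map_const_mul, mul_zero, mul_one]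
    congr 1
    ext
    simp [sq_nonneg σ]
  rw [h1, integral_map (by fun_prop) (continuous_gfun y).aestronglyMeasurable,
    integral_gaussianReal_eq_integral_smul one_ne_zero]
  have e1 : EqOn (fun u => gaussianPDFReal 0 1 u • gfun y (σ * u))
      (fun u => kconst * (Real.exp (-σ * u) * Real.exp (-u ^ 2 / 2))) (Ioi 0) := by
    intro u hu
    have hu' : 0 < u := hu
    simp only [smul_eq_mul, pdf_eq]
    rw [gfun, if_pos (by positivity)]
    ring_nf
  have e2 : EqOn (fun u => gaussianPDFReal 0 1 u • gfun y (σ * u))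
      (fun u => kconst * (Real.exp (-(σ / y) * (-u)) * Real.exp (-(-u) ^ 2 / 2))) (Iic 0) := by
    intro u hu
    have hu' : u ≤ 0 := hu
    simp only [smul_eq_mul, pdf_eq]
    have : gfun y (σ * u) = Real.exp (σ * u / y) := by
      unfold gfun
      split_ifs with h
      · have : u = 0 := by nlinarith
        simp [this]
      · rfl
    rw [this]
    ring_nf
  have i1 := ((Nfun_int σ).const_mul kconst).integrableOn (s := Ioi 0)
  have i2 := (((Nfun_int (σ / y)).const_mul kconst).comp_neg).integrableOn (s := Iic 0)
  have := setIntegral_union (Iic_disjoint_Ioi (le_refl (0:ℝ))) measurableSet_Ioi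
    (i2.congr_fun e2.symm measurableSet_Iic) (i1.congr_fun e1.symm measurableSet_Ioi)
  rw [Iic_union_Ioi, setIntegral_univ] at this
  rw [this, setIntegral_congr_fun measurableSet_Iic e2, setIntegral_congr_fun measurableSet_Ioi e1,
    integral_comp_neg_Iic 0 (fun u => kconst * (Real.exp (-(σ / y) * u) * Real.exp (-u ^ 2 / 2))),
    neg_zero, integral_const_mul, integral_const_mul]
  unfold Nfun
  ring

lemma gauss_side (σ y z : ℝ) (hσ : 0 < σ) (hy : 0 < y) (h100 : 100 * y ^ 2 ≤ σ ^ 2)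
    (hz : σ / √(1 + y) ≤ z) :
    gaussianReal 0 1 {x | z ≤ x} ≤ ENNReal.ofReal (Real.exp (-z ^ 2 / 2) *
      ∫ v, gfun y v ∂(gaussianReal 0 (Real.toNNReal (σ ^ 2)))) ∧
    0.2376 * ((1 + y) / (1 + σ)) ≤ ∫ v, gfun y v ∂(gaussianReal 0 (Real.toNNReal (σ ^ 2))) := by
  rw [gauss_tail, gauss_gfun σ y hσ hy]
  have hk := kconst_pos
  have hN := Nfun_nonneg σ
  have h1 : 0.99 * y * Nfun σ ≤ Nfun (σ / y) := by
    have hr : 0 < σ / y := by positivity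
    have a := Nfun_ge (σ / y) hr
    have b := Nfun_le σ hσ
    have c : 0.99 * y * (1 / σ) ≤ 1 / (σ / y) - 1 / (σ / y) ^ 3 := by
      have e : 1 / (σ / y) - 1 / (σ / y) ^ 3 = (1 - y ^ 2 / σ ^ 2) * (y * (1 / σ)) := by field_simp
      have e2 : y ^ 2 / σ ^ 2 ≤ 0.01 := by
        rw [div_le_iff₀ (by positivity)]; linarith
      rw [e, mul_assoc]
      gcongr
      linarith
    have d : 0.99 * y * Nfun σ ≤ 0.99 * y * (1 / σ) := by gcongr
    linarith
  constructor
  · apply ENNReal.ofReal_le_ofReal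
    gcongr
    have hs : 1 ≤ √(1 + y) := Real.one_le_sqrt.mpr (by linarith)
    have a := Nfun_anti _ _ hz
    have b := Nfun_scale σ (√(1 + y)) hs
    have c : √(1 + y) ≤ 1 + 0.99 * y := by
      apply Real.sqrt_le_iff.mpr
      constructor
      · positivity
      · nlinarith
    nlinarith [mul_le_mul_of_nonneg_right c hN]
  · have a := Nfun_ge' σ hσ
    have b := kconst_ge
    have c : 0.24 / (1 + σ) ≤ kconst * Nfun σ := by
      have : kconst * (Real.exp (-(1/2)) / (1 + σ)) ≤ kconst * Nfun σ := by gcongr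
      refine le_trans ?_ this
      rw [← mul_div_assoc]
      gcongr
    have d : (0.99 * (1 + y)) * (0.24 / (1 + σ)) ≤ (0.99 * (1 + y)) * (kconst * Nfun σ) := by gcongr
    have e : 0.2376 * ((1 + y) / (1 + σ)) = (0.99 * (1 + y)) * (0.24 / (1 + σ)) := by ring
    rw [e]
    refine d.trans ?_
    have f := mul_le_mul_of_nonneg_left h1 hk.le
    nlinarith [mul_nonneg hk.le hN]


lemma log_ineq (u X : ℝ) (hu : -1 < u) (huX : u ≤ X) (hX : 0 < X) :
    u ^ 2 / (1 + X) ≤ 2 * (u - Real.log (1 + u)) := by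
  rcases le_total 0 u with h | h
  · have h1 : Real.log (1 + u) ≤ Real.sinh (Real.log (1 + u)) :=
      Real.self_le_sinh_iff.mpr (Real.log_nonneg (by linarith))
    rw [Real.sinh_log (by linarith)] at h1
    have h2 : u ^ 2 / (1 + X) ≤ u ^ 2 / (1 + u) := by gcongr
    have h3 : u ^ 2 / (1 + u) = 2 * (u - (1 + u - (1 + u)⁻¹) / 2) := by field_simp; ring
    linarith
  · have h0 : |(-u)| < 1 := by rw [abs_lt]; constructor <;> linarith
    have hs := Real.hasSum_pow_div_log_of_abs_lt_one h0
    have h1 := sum_le_hasSum (Finset.range 2) (fun n _ => by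
      have : 0 ≤ -u := by linarith
      positivity) hs
    simp only [Finset.sum_range_succ, Finset.sum_range_zero, sub_neg_eq_add] at h1
    norm_num at h1
    have h2 : u ^ 2 / (1 + X) ≤ u ^ 2 := div_le_self (sq_nonneg _) (by linarith)
    linarith

lemma exists_l {m : ℕ} (b : ℝ) (f : Fin (m + 1) → ℝ) (hf : ∀ i, f i ∈ Set.Icc (0 : ℝ) b)
    (hfm : f (Fin.last m) = b) (α : Fin (m + 1) → ℝ) (hα : ∀ i, 0 < α i) (μ : ℝ) (hμ0 : 0 ≤ μ) (hμb : μ < b)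
    (hμ : ∑ j, α j * (f j - μ) < 0) :
    ∃ l, 0 < l ∧ l * (b - μ) < 1 ∧ ∑ j, α j * ((f j - μ) / (1 - l * (f j - μ))) = 0 := by
  set B := b - μ with hB
  have hBp : 0 < B := by linarith
  set a := α (Fin.last m) with ha
  have hap : 0 < a := hα _
  set T := ∑ j, α j with hT
  have hTp : 0 < T := Finset.sum_pos (fun i _ => hα i) Finset.univ_nonempty
  set δ := a * B / (μ * T + a * B) with hδ
  have hden : 0 < μ * T + a * B := by positivity
  have hδ0 : 0 < δ := by positivity
  have hδ1 : δ ≤ 1 := by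
    rw [hδ, div_le_one hden]
    have : 0 ≤ μ * T := by positivity
    linarith
  set l1 := (1 - δ) / B with hl1
  have hl10 : 0 ≤ l1 := div_nonneg (by linarith) hBp.le
  have hl1B : l1 * B = 1 - δ := by rw [hl1]; field_simp
  have hpos : ∀ l ∈ Icc 0 l1, ∀ j, 0 < 1 - l * (f j - μ) := by
    intro l hl j
    have h1 : f j - μ ≤ B := by rw [hB]; linarith [(hf j).2]
    have h2 : l * (f j - μ) ≤ l * B := mul_le_mul_of_nonneg_left h1 hl.1
    have h3 : l * B ≤ l1 * B := mul_le_mul_of_nonneg_right hl.2 hBp.le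
    linarith
  let G : ℝ → ℝ := fun l => ∑ j, α j * ((f j - μ) / (1 - l * (f j - μ)))
  have hG : ContinuousOn G (Icc 0 l1) := by
    refine continuousOn_finsetSum _ fun j _ => ?_
    refine ContinuousOn.mul continuousOn_const (ContinuousOn.div continuousOn_const (by fun_prop) ?_)
    intro l hl
    exact (hpos l hl j).ne'
  have hG0 : G 0 < 0 := by simpa [G] using hμ
  have hG1 : 0 ≤ G l1 := by
    have hmem : l1 ∈ Icc 0 l1 := ⟨hl10, le_refl _⟩
    have ht : ∀ j, -μ * α j ≤ α j * ((f j - μ) / (1 - l1 * (f j - μ))) := by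
      intro j
      have hp := hpos l1 hmem j
      have : -μ ≤ (f j - μ) / (1 - l1 * (f j - μ)) := by
        rcases le_total 0 (f j - μ) with h | h
        · have := div_nonneg h hp.le
          linarith
        · rw [le_div_iff₀ hp]
          have h1 := (hf j).1
          nlinarith [mul_nonneg hl10 (neg_nonneg.mpr h), mul_nonneg (mul_nonneg hl10 (neg_nonneg.mpr h)) hμ0]
      nlinarith [hα j]
    have hlast : α (Fin.last m) * ((f (Fin.last m) - μ) / (1 - l1 * (f (Fin.last m) - μ))) = μ * T + a * B := by
      rw [hfm, ← hB, hl1B, ← ha]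
      rw [show 1 - (1 - δ) = δ by ring, hδ]
      field_simp
    have h1 : -μ * T + (μ * T + a * B) ≤ G l1 + -μ * a := by
      simp only [G]
      rw [Fin.sum_univ_castSucc, hlast, hT, Fin.sum_univ_castSucc]
      have := Finset.sum_le_sum (s := Finset.univ) (fun (j : Fin m) _ => ht j.castSucc)
      rw [← Finset.mul_sum] at this
      rw [← ha]
      nlinarith
    have : 0 ≤ a * B + μ * a := by positivity
    nlinarith
  obtain ⟨l, hl, hlG⟩ := intermediate_value_Icc hl10 hG (show (0:ℝ) ∈ Icc (G 0) (G l1) from ⟨hG0.le, hG1⟩)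
  have hl0 : l ≠ 0 := by
    rintro rfl
    linarith
  refine ⟨l, lt_of_le_of_ne hl.1 (Ne.symm hl0), ?_, hlG⟩
  have := hpos l hl (Fin.last m)
  rw [hfm] at this
  linarith

lemma Kinf_ge {m : ℕ} (p x f : Fin (m+1) → ℝ) (μ l : ℝ) (hl : 0 < l) (hp : ∀ i, 0 < p i) (hp1 : ∑ i, p i = 1)
    (hx : ∀ i, -1 < x i) (hc : ∀ i, l * ((f i - μ) * (1 + x i)) = x i) (hs : ∑ i, p i * x i = 0) :
    -∑ i, p i * Real.log (1 + x i) ≤ Kinf p μ f := by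
  have hx' : ∀ i, 0 < 1 + x i := fun i => by linarith [hx i]
  have hinv : ∀ i, 1 - l * (f i - μ) = (1 + x i)⁻¹ := by
    intro i
    refine eq_inv_of_mul_eq_one_left ?_
    linarith [hc i]
  unfold Kinf
  apply le_csInf
  · refine ⟨_, fun i => p i * (1 + x i), ⟨fun i => (mul_pos (hp i) (hx' i)).le, ?_⟩, ?_, ?_, rfl⟩
    · simp only [mul_add, mul_one, Finset.sum_add_distrib]
      rw [hp1, hs, add_zero]
    · intro i hi
      exact absurd hi (mul_pos (hp i) (hx' i)).ne'
    · have e : l * (∑ i, f i * (p i * (1 + x i)) - μ * ∑ i, p i * (1 + x i)) = ∑ i, p i * x i := by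
        rw [Finset.mul_sum, ← Finset.sum_sub_distrib, Finset.mul_sum]
        refine Finset.sum_congr rfl fun i _ => ?_
        linear_combination (p i) * hc i
      have e2 : ∑ i, p i * (1 + x i) = 1 := by
        simp only [mul_add, mul_one, Finset.sum_add_distrib]
        rw [hp1, hs, add_zero]
      rw [e2, hs, mul_one] at e
      have := (mul_eq_zero.mp e).resolve_left hl.ne'
      linarith
  · rintro _ ⟨q, ⟨hq0, hq1⟩, hqp, hqf, rfl⟩
    have hq : ∀ i, 0 < q i := fun i => lt_of_le_of_ne (hq0 i) (fun h => (hp i).ne' (hqp i h.symm))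
    unfold klReal
    rw [← Finset.sum_neg_distrib]
    have hterm : ∀ i, -(p i * Real.log (1 + x i)) ≤
        (if p i = 0 then 0 else p i * Real.log (p i / q i)) + (q i - l * (f i * q i) + l * μ * q i - p i) := by
      intro i
      rw [if_neg (hp i).ne']
      have h1 := Real.log_le_sub_one_of_pos (x := q i / (p i * (1 + x i))) (div_pos (hq i) (mul_pos (hp i) (hx' i)))
      rw [Real.log_div (hq i).ne' (mul_pos (hp i) (hx' i)).ne', Real.log_mul (hp i).ne' (hx' i).ne'] at h1
      rw [Real.log_div (hp i).ne' (hq i).ne']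
      have h2 := mul_le_mul_of_nonneg_left h1 (hp i).le
      have h3 : p i * (q i / (p i * (1 + x i)) - 1) = q i * (1 - l * (f i - μ)) - p i := by
        rw [hinv]
        have := hp i
        have := hx' i
        field_simp
      rw [h3] at h2
      nlinarith
    have := Finset.sum_le_sum (s := Finset.univ) (fun i _ => hterm i)
    refine this.trans ?_
    rw [Finset.sum_add_distrib]
    have e : ∑ i, (q i - l * (f i * q i) + l * μ * q i - p i) = l * (μ - ∑ i, f i * q i) := by
      simp only [Finset.sum_sub_distrib, Finset.sum_add_distrib, ← Finset.mul_sum]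
      rw [hq1, hp1]; ring
    rw [e]
    have : l * (μ - ∑ i, f i * q i) ≤ 0 := mul_nonpos_of_nonneg_of_nonpos hl.le (by linarith)
    linarith

lemma c0_ge : 289 ≤ c0 := by
  unfold c0
  have h6 : 2.449 ≤ √6 := Real.le_sqrt_of_sq_le (by norm_num)
  have h1 : 21.333 ≤ 8 + 49 * √6 / 9 := by linarith
  have h2 : (21.333:ℝ) ^ 2 ≤ (8 + 49 * √6 / 9) ^ 2 := by gcongr
  have hpi := Real.pi_lt_d4
  have hpp := Real.pi_pos
  rw [div_mul_eq_mul_div, le_div_iff₀ hpp]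
  nlinarith


/-- **Lower bound on Dirichlet boundary-crossing probabilities** (Theorem 1, lower bound). -/
theorem dirichlet_crossing_lower
    (m : ℕ) (hm : 1 ≤ m) (b : ℝ) (hb : 0 < b)
    (f : Fin (m + 1) → ℝ) (hf : ∀ i, f i ∈ Set.Icc (0 : ℝ) b)
    (hf0 : f 0 = 0) (hfm : f (Fin.last m) = b)
    (α : Fin (m + 1) → ℝ) (hα : ∀ i, 0 < α i)
    (ε : ℝ) (hε : ε ∈ Set.Ioo (0 : ℝ) 1)
    (hmin : c0 / ε ^ 2 ≤ min (α 0) (α (Fin.last m)))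
    (μ : ℝ) (hμ : μ ∈ Set.Ioo (∑ ℓ, f ℓ * (α ℓ / ∑ j, α j)) b) :
    ENNReal.ofReal (1 - ε) *
        gaussianReal 0 1
          {x | Real.sqrt (2 * (∑ j, α j) * Kinf (fun ℓ => α ℓ / ∑ j, α j) μ f) ≤ x}
      ≤ dirichlet m (Function.update α (Fin.last m) (α (Fin.last m) + 1))
          {w | μ ≤ ∑ ℓ, f ℓ * w ℓ} := by
  obtain ⟨hε0, hε1⟩ := hε
  obtain ⟨hμ1, hμb⟩ := hμ
  set T := ∑ j, α j with hT
  have hTp : 0 < T := Finset.sum_pos (fun i _ => hα i) Finset.univ_nonempty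
  set A := min (α 0) (α (Fin.last m)) with hA
  have hAε : 289 ≤ A * ε ^ 2 := by
    rw [div_le_iff₀ (by positivity)] at hmin
    exact c0_ge.trans hmin
  have hA289 : 289 ≤ A := by
    have : 0 < A := lt_min (hα _) (hα _)
    have : ε ^ 2 ≤ 1 := by nlinarith
    nlinarith
  have hμ0 : 0 ≤ μ := by
    refine le_trans (Finset.sum_nonneg fun i _ => ?_) hμ1.le
    exact mul_nonneg (hf i).1 (div_nonneg (hα i).le hTp.le)
  have hneg : ∑ j, α j * (f j - μ) < 0 := by
    have e : ∑ j, α j * (f j - μ) = T * (∑ ℓ, f ℓ * (α ℓ / T) - μ) := by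
      rw [mul_sub, Finset.mul_sum, hT, Finset.sum_mul, ← Finset.sum_sub_distrib]
      refine Finset.sum_congr rfl fun j _ => ?_
      rw [← hT]
      field_simp
    rw [e]
    exact mul_neg_of_pos_of_neg hTp (by linarith)
  obtain ⟨l, hl, hlb, hlsum⟩ := exists_l b f hf hfm α hα μ hμ0 hμb hneg
  have hd : ∀ j, 0 < 1 - l * (f j - μ) := by
    intro j
    have : l * (f j - μ) ≤ l * (b - μ) := mul_le_mul_of_nonneg_left (by linarith [(hf j).2]) hl.le
    linarith
  set x : Fin (m+1) → ℝ := fun j => l * (f j - μ) / (1 - l * (f j - μ)) with hx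
  have h1x : ∀ j, 1 + x j = (1 - l * (f j - μ))⁻¹ := by
    intro j
    have := (hd j).ne'
    simp only [hx]
    field_simp
    ring
  have hx1 : ∀ j, -1 < x j := by
    intro j
    have := inv_pos.mpr (hd j)
    rw [← h1x] at this
    linarith
  have hc : ∀ j, l * ((f j - μ) * (1 + x j)) = x j := by
    intro j
    rw [h1x]
    simp only [hx]
    ring
  have hsum : ∑ j, α j * x j = 0 := by
    have : ∑ j, α j * x j = l * ∑ j, α j * ((f j - μ) / (1 - l * (f j - μ))) := by
      rw [Finset.mul_sum]
      refine Finset.sum_congr rfl fun j _ => ?_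
      simp only [hx]; ring
    rw [this, hlsum, mul_zero]
  have hmono : ∀ i j, f i ≤ f j → x i ≤ x j := by
    intro i j hij
    have h2 : (1 - l * (f i - μ))⁻¹ ≤ (1 - l * (f j - μ))⁻¹ := by
      apply inv_anti₀ (hd j)
      nlinarith
    rw [← h1x, ← h1x] at h2
    linarith
  set y := x (Fin.last m) with hy
  have hyp : 0 < y := by
    refine div_pos (mul_pos hl ?_) (hd _)
    rw [hfm]; linarith
  have hxy : ∀ j, x j ≤ y := fun j => hmono _ _ (by rw [hfm]; exact (hf j).2)
  have hx0 : ∀ j, x 0 ≤ x j := fun j => hmono _ _ (by rw [hf0]; exact (hf j).1)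
  have hQ : ∀ j, 0 ≤ α j * x j ^ 2 := fun j => mul_nonneg (hα j).le (sq_nonneg _)
  set Q := ∑ j, α j * x j ^ 2 with hQd
  have hQj : ∀ j, α j * x j ^ 2 ≤ Q := fun j =>
    Finset.single_le_sum (f := fun j => α j * x j ^ 2) (fun i _ => hQ i) (Finset.mem_univ j)
  have hQp : 0 < Q := lt_of_lt_of_le (mul_pos (hα _) (by positivity)) (hQj (Fin.last m))
  set σ := √Q with hσd
  have hσ : 0 < σ := Real.sqrt_pos.mpr hQp
  have hσ2 : σ ^ 2 = Q := Real.sq_sqrt hQp.le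
  have hAy : y ^ 2 * A ≤ σ ^ 2 := by
    rw [hσ2]
    refine le_trans ?_ (hQj (Fin.last m))
    rw [mul_comm]
    exact mul_le_mul_of_nonneg_right (min_le_right _ _) (sq_nonneg _)
  have hA0 : x 0 ^ 2 * A ≤ σ ^ 2 := by
    rw [hσ2]
    refine le_trans ?_ (hQj 0)
    rw [mul_comm]
    exact mul_le_mul_of_nonneg_right (min_le_left _ _) (sq_nonneg _)
  set R := max y (-x 0) with hR
  have hRp : 0 < R := lt_of_lt_of_le hyp (le_max_left _ _)
  have hRj : ∀ j, |x j| ≤ R := by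
    intro j
    rw [abs_le]
    constructor
    · have := le_max_right y (-x 0)
      linarith [hx0 j]
    · exact (hxy j).trans (le_max_left _ _)
  have hRA : R ^ 2 * A ≤ σ ^ 2 := by
    rcases max_choice y (-x 0) with h | h
    · rw [hR, h]; exact hAy
    · rw [hR, h, neg_sq]; exact hA0
  have herr := err_bound α x hα hsum R A σ hRp hRj hσ hσ2 (by linarith) hRA y hyp
  -- the exponent
  set K := Kinf (fun ℓ => α ℓ / T) μ f with hK
  have hKge : -∑ i, α i * Real.log (1 + x i) ≤ T * K := by
    have := Kinf_ge (fun ℓ => α ℓ / T) x f μ l hl (fun i => div_pos (hα i) hTp)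
      (by rw [← Finset.sum_div]; exact div_self hTp.ne') hx1 hc
      (by
        have : ∑ i, α i / T * x i = (∑ i, α i * x i) / T := by
          rw [Finset.sum_div]
          refine Finset.sum_congr rfl fun j _ => ?_
          ring
        rw [this, hsum, zero_div])
    have h2 := mul_le_mul_of_nonneg_left this hTp.le
    refine le_trans (le_of_eq ?_) h2
    rw [mul_neg, Finset.mul_sum]
    congr 1
    refine Finset.sum_congr rfl fun j _ => ?_
    field_simp
  have hlog : σ ^ 2 / (1 + y) ≤ 2 * -∑ i, α i * Real.log (1 + x i) := by
    have e : 2 * -∑ i, α i * Real.log (1 + x i) = ∑ i, α i * (2 * (x i - Real.log (1 + x i))) := by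
      have : ∑ i, α i * (2 * (x i - Real.log (1 + x i))) = 2 * ∑ i, α i * x i - 2 * ∑ i, α i * Real.log (1 + x i) := by
        rw [Finset.mul_sum, Finset.mul_sum, ← Finset.sum_sub_distrib]
        refine Finset.sum_congr rfl fun j _ => ?_
        ring
      rw [this, hsum]; ring
    rw [e, hσ2, hQd, Finset.sum_div]
    refine Finset.sum_le_sum fun i _ => ?_
    rw [mul_div_assoc]
    exact mul_le_mul_of_nonneg_left (log_ineq (x i) y (hx1 i) (hxy i) hyp) (hα i).le
  set z := √(2 * T * K) with hz
  have hzz : σ ^ 2 / (1 + y) ≤ 2 * T * K := by linarith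
  have hz2 : z ^ 2 = 2 * T * K := Real.sq_sqrt (le_trans (by positivity) hzz)
  have hzge : σ / √(1 + y) ≤ z := by
    apply Real.le_sqrt_of_sq_le
    rw [div_pow, Real.sq_sqrt (show 0 ≤ 1 + y by linarith)]
    exact hzz
  obtain ⟨hg1, hg2⟩ := gauss_side σ y z hσ hyp (by nlinarith [sq_nonneg y]) hzge
  set S := ∫ v, gfun y v ∂(gaussianReal 0 (Real.toNNReal (σ ^ 2))) with hS
  set E := ∫ v, gfun y v ∂(lawS α x) with hE
  have hSp : 0 ≤ S := le_trans (by positivity) hg2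
  have hES : (1 - ε) * S ≤ E := by
    have hAp : 0 < √A := Real.sqrt_pos.mpr (by linarith)
    have h17 : 17 ≤ ε * √A := by
      apply le_of_sq_le_sq _ (by positivity)
      rw [mul_pow, Real.sq_sqrt (by linarith)]
      linarith
    have hs2 : √2 ≤ 1.42 := Real.sqrt_le_iff.mpr ⟨by norm_num, by norm_num⟩
    have h3 : (1 + y) * (5 / 2 * √2) / ((1 + σ) * √A) ≤ ε * S := by
      have h4 : (1 + y) * (5 / 2 * √2) / ((1 + σ) * √A) = ((1 + y) / (1 + σ)) * ((5 / 2 * √2) / √A) := by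
        field_simp
      have h5 : (5 / 2 * √2) / √A ≤ ε * 0.2376 := by
        rw [div_le_iff₀ hAp, mul_right_comm]
        linarith
      have hq : 0 ≤ (1 + y) / (1 + σ) := by positivity
      rw [h4]
      calc _ ≤ ((1 + y) / (1 + σ)) * (ε * 0.2376) := mul_le_mul_of_nonneg_left h5 hq
        _ = ε * (0.2376 * ((1 + y) / (1 + σ))) := by ring
        _ ≤ ε * S := mul_le_mul_of_nonneg_left hg2 hε0.le
    have := (abs_le.mp (herr.trans h3)).1
    linarith
  have hprod : Real.exp (-z ^ 2 / 2) ≤ ∏ j, (1 + x j) ^ (α j) := by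
    have e : ∏ j, (1 + x j) ^ (α j) = Real.exp (∑ j, α j * Real.log (1 + x j)) := by
      rw [Real.exp_sum]
      refine Finset.prod_congr rfl fun j _ => ?_
      rw [Real.rpow_def_of_pos (by linarith [hx1 j]), mul_comm]
    rw [e]
    apply Real.exp_le_exp.mpr
    rw [neg_div]
    rw [hz2]
    linarith
  have hβ : ∀ i, 0 < Function.update α (Fin.last m) (α (Fin.last m) + 1) i := by
    intro i
    by_cases h : i = Fin.last m
    · subst h; rw [Function.update_self]; linarith [hα (Fin.last m)]
    · rw [Function.update_of_ne h]; exact hα i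
  have := isProb_lawS α x hα
  have hEi : ∫⁻ v, ENNReal.ofReal (gfun y v) ∂(lawS α x) = ENNReal.ofReal E := by
    rw [hE, ofReal_integral_eq_lintegral_ofReal]
    · refine Integrable.of_bound (measurable_gfun y).aestronglyMeasurable 1 (ae_of_all _ fun v => ?_)
      rw [Real.norm_of_nonneg (gfun_nonneg _ _)]
      exact gfun_le_one y hyp v
    · exact ae_of_all _ fun v => gfun_nonneg y v
  rw [dirichlet_eq_gamma m _ hβ f μ, dirichlet_formula α x (fun j => f j - μ) l hl hα hx1 hc hyp, hEi,
    ← ENNReal.ofReal_mul (le_trans (Real.exp_pos _).le hprod)]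
  calc _ ≤ ENNReal.ofReal (1 - ε) * ENNReal.ofReal (Real.exp (-z ^ 2 / 2) * S) := by gcongr
    _ = ENNReal.ofReal (Real.exp (-z ^ 2 / 2) * ((1 - ε) * S)) := by
      rw [← ENNReal.ofReal_mul (by linarith)]; congr 1; ring
    _ ≤ _ := by
      apply ENNReal.ofReal_le_ofReal
      exact mul_le_mul hprod hES (mul_nonneg (by linarith) hSp) (le_trans (Real.exp_pos _).le hprod)


end
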